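/- arXiv:2008.12651 — 3 statements merged into one kernel-verified Lean document; each statement's English description precedes it below -/
import Mathlib

section
/- Let F be a finite field, σ an automorphism of F with σ∘σ = id, and V a nonzero finite-dimensional F-vector space. Let β : V × V → F be additive in each variable, F-linear in the first variable and σ-semilinear in the second, reflexive (β(u,v) = 0 iff β(v,u) = 0), and nondegenerate on V. Let X be an invertible F-linear endomorphism of V with β(Xu, Xv) = β(u,v) for all u,v. Then there exist finitely many X-invariant subspaces U_1, …, U_k of V forming an internal direct sum V = U_1 ⊕ ⋯ ⊕ U_k, pairwise orthogonal (β(u,v) = 0 whenever u ∈ U_i, v ∈ U_j with i ≠ j), such that for each i one of the following holds: (a) U_i is a cyclic F[X]-module, i.e. U_i is spanned by {X^m v : m ∈ ℕ} for some v ∈ U_i, and the minimal polynomial of the restriction of X to U_i equals f^e for some monic irreducible f with f(0) ≠ 0, f = f*, and some e ≥ 1; or (b) U_i = W ⊕ W′ for X-invariant subspaces W and W′ that are cyclic F[X]-modules whose restricted minimal polynomials are f^e and (f*)^e respectively, for some monic irreducible f with f(0) ≠ 0 and some e ≥ 1. -/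
open Polynomial

/-- The σ-dual polynomial `f*(t) = σ(f(0))⁻¹ · t^(deg f) · (σf)(1/t)`. -/
noncomputable def sigmaDualPoly {F : Type*} [Field F] (σ : F ≃+* F) (f : Polynomial F) :
    Polynomial F :=
  Polynomial.C (σ (f.coeff 0))⁻¹ * (f.map σ.toRingHom).reverse

/-- `U` is a cyclic `F[X]`-submodule: it is spanned by the `X`-orbit of a single vector. -/
def IsCyclicSub {F V : Type*} [Field F] [AddCommGroup V] [Module F V]
    (X : V →ₗ[F] V) (U : Submodule F V) : Prop :=
  ∃ v ∈ U, U = Submodule.span F (Set.range fun m : ℕ => (X ^ m) v)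

/-!
If `B` is the form and `N` is `X`-invariant, then `p(X) v` is orthogonal to `N` exactly when `v` is
orthogonal to `p*(X) N`, because `X` is an isometry and `X N = N`. Hence the `f`-primary part of
`V` is orthogonal to itself unless `f = f*`.

Let `N ≠ 0` be invariant and nondegenerate, and let `f ^ (n + 1)` be the exact power of an
irreducible `f` dividing the minimal polynomial of `X` on `N`. Nondegeneracy provides `v, v' ∈ N`,
killed by `f ^ (n + 1)` and `f* ^ (n + 1)`, such that `f ^ n v` is not orthogonal to the cyclic
submodule of `v'`. A nonzero invariant subspace of a primary cyclic module contains its socle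
generator, so whether two primary cyclic modules pair nondegenerately is decided by that one vector.
Either some `u` pairs with itself in this way, and its cyclic submodule is nondegenerate, or the sum
of the cyclic submodules of `v` and `v'` is direct and nondegenerate. Split off this block and
repeat in its orthogonal complement in `N`.
-/

section Dual

variable {F : Type*} [Field F]

theorem irreducible_mirror_iff {p : F[X]} : Irreducible p.mirror ↔ Irreducible p :=
  let e : F[X] ≃* F[X] :=
    { mirror_involutive.toPerm with map_mul' := fun p q => p.mirror_mul_of_domain q }
  MulEquiv.irreducible_iff e

theorem coeff_zero_pow_ne_zero {f : F[X]} (h0 : f.coeff 0 ≠ 0) (k : ℕ) :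
    (f ^ k).coeff 0 ≠ 0 := by
  rw [coeff_zero_eq_eval_zero] at h0 ⊢
  rw [eval_pow]
  exact pow_ne_zero k h0

variable (σ : F ≃+* F)

theorem sigmaDualPoly_one : sigmaDualPoly σ (1 : F[X]) = 1 := by
  have h : (1 : F[X]).reverse = 1 := reverse_C 1
  simp [sigmaDualPoly, h]

theorem sigmaDualPoly_mul (p q : F[X]) :
    sigmaDualPoly σ (p * q) = sigmaDualPoly σ p * sigmaDualPoly σ q := by
  simp only [sigmaDualPoly, mul_coeff_zero, Polynomial.map_mul, reverse_mul_of_domain, map_mul,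
    mul_inv]
  ring

theorem sigmaDualPoly_pow (p : F[X]) (n : ℕ) :
    sigmaDualPoly σ (p ^ n) = sigmaDualPoly σ p ^ n := by
  induction n with
  | zero => rw [pow_zero, pow_zero, sigmaDualPoly_one]
  | succ n ih => rw [pow_succ, sigmaDualPoly_mul, ih, pow_succ]

variable {f : F[X]}

theorem sigmaDualPoly_eq_C_mul_mirror (h0 : f.coeff 0 ≠ 0) :
    sigmaDualPoly σ f = C (σ (f.coeff 0))⁻¹ * (f.map σ.toRingHom).mirror := by
  have h : (f.map σ.toRingHom).natTrailingDegree = 0 :=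
    natTrailingDegree_eq_zero.2 (Or.inr (by simpa using h0))
  rw [sigmaDualPoly, mirror, h, pow_zero, mul_one]

theorem monic_sigmaDualPoly (h0 : f.coeff 0 ≠ 0) : (sigmaDualPoly σ f).Monic := by
  have h : (f.map σ.toRingHom).natTrailingDegree = 0 :=
    natTrailingDegree_eq_zero.2 (Or.inr (by simpa using h0))
  rw [sigmaDualPoly_eq_C_mul_mirror σ h0, Monic, leadingCoeff_mul, leadingCoeff_C,
    mirror_leadingCoeff, trailingCoeff, h]
  simp [h0]

theorem irreducible_sigmaDualPoly (hf : Irreducible f) (h0 : f.coeff 0 ≠ 0) :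
    Irreducible (sigmaDualPoly σ f) := by
  have hunit : IsUnit (C (σ (f.coeff 0))⁻¹) :=
    isUnit_C.2 (isUnit_iff_ne_zero.2 (inv_ne_zero (by simpa using h0)))
  rw [sigmaDualPoly_eq_C_mul_mirror σ h0, irreducible_isUnit_mul hunit, irreducible_mirror_iff]
  exact (MulEquiv.irreducible_iff (mapEquiv σ)).2 hf

theorem isCoprime_sigmaDualPoly (hm : f.Monic) (hf : Irreducible f) (h0 : f.coeff 0 ≠ 0)
    (hne : sigmaDualPoly σ f ≠ f) : IsCoprime f (sigmaDualPoly σ f) :=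
  hf.coprime_iff_not_dvd.2 fun hdvd => hne <| .symm <|
    eq_of_monic_of_associated hm (monic_sigmaDualPoly σ h0)
      (hf.associated_of_dvd (irreducible_sigmaDualPoly σ hf h0) hdvd)

end Dual

section PrimePower

variable {R : Type*} [CommRing R] [IsDomain R] [IsPrincipalIdealRing R] {f : R}

theorem exists_pow_succ_dvd_mul_sub_pow (hf : Irreducible f) {n : ℕ} {p : R}
    (hp : ¬ f ^ (n + 1) ∣ p) : ∃ q, f ^ (n + 1) ∣ q * p - f ^ n := by
  have hp0 : p ≠ 0 := fun h => hp (h ▸ dvd_zero _)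
  obtain ⟨i, a, ha, rfl⟩ := WfDvdMonoid.max_power_factor hp0 hf
  have hi : i ≤ n := by
    by_contra! h
    exact hp ((pow_dvd_pow f h).mul_right a)
  obtain ⟨b, c, hbc⟩ : IsCoprime a (f ^ (n + 1)) :=
    (hf.coprime_iff_not_dvd.2 ha).symm.pow_right
  have hpow : f ^ n = f ^ (n - i) * f ^ i := by rw [← pow_add, Nat.sub_add_cancel hi]
  refine ⟨b * f ^ (n - i), -(f ^ n * c), ?_⟩
  linear_combination -(b * a) * hpow + f ^ n * hbc

end PrimePower

theorem exists_monic_irreducible_pow_succ_mul {F : Type*} [Field F] {p : F[X]} (hp0 : p ≠ 0)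
    (hp : ¬ IsUnit p) :
    ∃ (f : F[X]) (n : ℕ) (h : F[X]), f.Monic ∧ Irreducible f ∧ IsCoprime f h ∧
      p = f ^ (n + 1) * h := by
  obtain ⟨f, hm, hf, hfp⟩ := exists_monic_irreducible_factor p hp
  obtain ⟨k, h, hfh, rfl⟩ := WfDvdMonoid.max_power_factor hp0 hf
  obtain ⟨n, rfl⟩ : ∃ n, k = n + 1 := Nat.exists_eq_succ_of_ne_zero fun hk =>
    hfh (by simpa [hk] using hfp)
  exact ⟨f, n, h, hm, hf, hf.coprime_iff_not_dvd.2 hfh, rfl⟩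

section Endomorphism

variable {R M : Type*} [CommRing R] [AddCommGroup M] [Module R M] {X : Module.End R M}
  {N : Submodule R M} {p q : R[X]} {v : M}

theorem aeval_mul_apply (X : Module.End R M) (p q : R[X]) (v : M) :
    aeval X (p * q) v = aeval X p (aeval X q v) := by
  rw [map_mul, Module.End.mul_apply]

theorem aeval_apply_comm (X : Module.End R M) (p q : R[X]) (v : M) :
    aeval X p (aeval X q v) = aeval X q (aeval X p v) := by
  rw [← aeval_mul_apply, mul_comm, aeval_mul_apply]

theorem aeval_apply_eq_zero_of_dvd (hpq : p ∣ q) (hp : aeval X p v = 0) : aeval X q v = 0 := by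
  obtain ⟨r, rfl⟩ := hpq
  rw [mul_comm, aeval_mul_apply, hp, map_zero]

theorem exists_aeval_aeval_apply_eq_of_isCoprime (hpq : IsCoprime p q) (hp : aeval X p v = 0) :
    ∃ r : R[X], aeval X q (aeval X r v) = v := by
  obtain ⟨a, b, hab⟩ := hpq
  refine ⟨b, ?_⟩
  have h : aeval X (a * p + b * q) v = v := by rw [hab, map_one, Module.End.one_apply]
  rwa [map_add, LinearMap.add_apply, aeval_mul_apply, hp, map_zero, zero_add, mul_comm,
    aeval_mul_apply] at h

theorem eq_zero_of_isCoprime_of_aeval_apply_eq_zero (hpq : IsCoprime p q) (hp : aeval X p v = 0)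
    (hq : aeval X q v = 0) : v = 0 := by
  obtain ⟨r, hr⟩ := exists_aeval_aeval_apply_eq_of_isCoprime hpq hp
  rw [← hr, aeval_apply_comm, hq, map_zero]

theorem aeval_apply_mem (hN : N ∈ X.invtSubmodule) (p : R[X]) (hv : v ∈ N) : aeval X p v ∈ N :=
  aeval_apply_smul_mem_of_le_comap hv p X hN

theorem aeval_restrict_apply (hN : ∀ x ∈ N, X x ∈ N) (p : R[X]) (x : N) :
    (aeval (X.restrict hN) p x : M) = aeval X p x := by
  induction p using Polynomial.induction_on' with
  | add p q hp hq => simp [hp, hq]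
  | monomial n a =>
    simp only [aeval_monomial, Module.End.mul_apply, Module.algebraMap_end_apply,
      Submodule.coe_smul]
    rw [Module.End.pow_restrict n hN, LinearMap.coe_restrict_apply]

theorem aeval_restrict_eq_zero_iff (hN : ∀ x ∈ N, X x ∈ N) :
    aeval (X.restrict hN) p = 0 ↔ ∀ x ∈ N, aeval X p x = 0 := by
  simp only [LinearMap.ext_iff, Subtype.forall, Subtype.ext_iff, aeval_restrict_apply,
    LinearMap.zero_apply, Submodule.coe_zero]

/-- The `R[X]`-submodule generated by `v`, as the span of the `X`-orbit of `v`. -/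
def cyclicSubmodule (X : Module.End R M) (v : M) : Submodule R M :=
  Submodule.span R (Set.range fun m : ℕ => (X ^ m) v)

theorem mem_cyclicSubmodule {x : M} : x ∈ cyclicSubmodule X v ↔ ∃ p : R[X], aeval X p v = x := by
  constructor
  · intro hx
    induction hx using Submodule.span_induction with
    | mem x hx => obtain ⟨m, rfl⟩ := hx; exact ⟨Polynomial.X ^ m, by simp⟩
    | zero => exact ⟨0, by simp⟩
    | add x y _ _ hx hy =>
      obtain ⟨p, rfl⟩ := hx
      obtain ⟨q, rfl⟩ := hy
      exact ⟨p + q, by simp⟩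
    | smul a x _ hx => obtain ⟨p, rfl⟩ := hx; exact ⟨a • p, by simp⟩
  · rintro ⟨p, rfl⟩
    rw [aeval_eq_sum_range, LinearMap.sum_apply]
    exact Submodule.sum_mem _ fun m _ =>
      Submodule.smul_mem _ _ (Submodule.subset_span ⟨m, rfl⟩)

theorem aeval_apply_mem_cyclicSubmodule (X : Module.End R M) (p : R[X]) (v : M) :
    aeval X p v ∈ cyclicSubmodule X v :=
  mem_cyclicSubmodule.2 ⟨p, rfl⟩

theorem self_mem_cyclicSubmodule (X : Module.End R M) (v : M) : v ∈ cyclicSubmodule X v := by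
  simpa using aeval_apply_mem_cyclicSubmodule X 1 v

theorem cyclicSubmodule_mem_invtSubmodule (X : Module.End R M) (v : M) :
    cyclicSubmodule X v ∈ X.invtSubmodule := by
  intro x hx
  obtain ⟨p, rfl⟩ := mem_cyclicSubmodule.1 hx
  exact mem_cyclicSubmodule.2 ⟨Polynomial.X * p, by simp⟩

theorem cyclicSubmodule_le (hN : N ∈ X.invtSubmodule) (hv : v ∈ N) : cyclicSubmodule X v ≤ N := by
  intro x hx
  obtain ⟨p, rfl⟩ := mem_cyclicSubmodule.1 hx
  exact aeval_apply_mem hN p hv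

theorem aeval_apply_eq_zero_of_mem_cyclicSubmodule {x : M} (hp : aeval X p v = 0)
    (hx : x ∈ cyclicSubmodule X v) : aeval X p x = 0 := by
  obtain ⟨q, rfl⟩ := mem_cyclicSubmodule.1 hx
  rw [aeval_apply_comm, hp, map_zero]

end Endomorphism

section Primary

variable {F V : Type*} [Field F] [AddCommGroup V] [Module F V] {X : Module.End F V}
  {N : Submodule F V} {f : F[X]} {n : ℕ} {v : V}

theorem isCyclicSub_cyclicSubmodule (X : Module.End F V) (v : V) :
    IsCyclicSub X (cyclicSubmodule X v) :=
  ⟨v, self_mem_cyclicSubmodule X v, rfl⟩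

theorem exists_aeval_aeval_apply_eq_pow (hf : Irreducible f) (hv : aeval X (f ^ (n + 1)) v = 0)
    {p : F[X]} (hp : ¬ f ^ (n + 1) ∣ p) :
    ∃ q : F[X], aeval X q (aeval X p v) = aeval X (f ^ n) v := by
  obtain ⟨q, hq⟩ := exists_pow_succ_dvd_mul_sub_pow hf hp
  refine ⟨q, sub_eq_zero.1 ?_⟩
  rw [← aeval_mul_apply, ← LinearMap.sub_apply, ← map_sub]
  exact aeval_apply_eq_zero_of_dvd hq hv

theorem aeval_apply_eq_zero_iff_pow_succ_dvd (hf : Irreducible f)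
    (hv : aeval X (f ^ (n + 1)) v = 0) (hv' : aeval X (f ^ n) v ≠ 0) {p : F[X]} :
    aeval X p v = 0 ↔ f ^ (n + 1) ∣ p := by
  refine ⟨fun hp => ?_, fun h => aeval_apply_eq_zero_of_dvd h hv⟩
  by_contra hdvd
  obtain ⟨q, hq⟩ := exists_aeval_aeval_apply_eq_pow hf hv hdvd
  exact hv' (by rw [← hq, hp, map_zero])

theorem minpoly_restrict_cyclicSubmodule (hm : f.Monic) (hf : Irreducible f)
    (hv : aeval X (f ^ (n + 1)) v = 0) (hv' : aeval X (f ^ n) v ≠ 0)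
    (h : ∀ x ∈ cyclicSubmodule X v, X x ∈ cyclicSubmodule X v) :
    minpoly F (X.restrict h) = f ^ (n + 1) := by
  have hann : aeval (X.restrict h) (f ^ (n + 1)) = 0 :=
    (aeval_restrict_eq_zero_iff h).2 fun _ => aeval_apply_eq_zero_of_mem_cyclicSubmodule hv
  have hmin : aeval X (minpoly F (X.restrict h)) v = 0 :=
    (aeval_restrict_eq_zero_iff h).1 (minpoly.aeval _ _) v (self_mem_cyclicSubmodule X v)
  exact eq_of_monic_of_associated (minpoly.monic ⟨_, hm.pow _, hann⟩) (hm.pow _)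
    (associated_of_dvd_dvd (minpoly.dvd _ _ hann)
      ((aeval_apply_eq_zero_iff_pow_succ_dvd hf hv hv').1 hmin))

theorem disjoint_cyclicSubmodule_of_pow_apply_notMem (hf : Irreducible f)
    (hv : aeval X (f ^ (n + 1)) v = 0) (hN : N ∈ X.invtSubmodule)
    (hvN : aeval X (f ^ n) v ∉ N) : Disjoint (cyclicSubmodule X v) N := by
  refine Submodule.disjoint_def.2 fun x hx hxN => ?_
  obtain ⟨p, rfl⟩ := mem_cyclicSubmodule.1 hx
  by_contra hx0
  obtain ⟨q, hq⟩ := exists_aeval_aeval_apply_eq_pow hf hv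
    fun hdvd => hx0 (aeval_apply_eq_zero_of_dvd hdvd hv)
  exact hvN (hq ▸ aeval_apply_mem hN q hxN)

theorem mem_of_mem_cyclicSubmodule_of_aeval_apply_eq_zero (hf : Irreducible f)
    (hv : aeval X (f ^ (n + 1)) v = 0) (hv0 : aeval X (f ^ n) v ≠ 0) (hN : N ∈ X.invtSubmodule)
    (hvN : aeval X (f ^ n) v ∈ N) {x : V} (hx : x ∈ cyclicSubmodule X v)
    (hfx : aeval X f x = 0) : x ∈ N := by
  obtain ⟨p, rfl⟩ := mem_cyclicSubmodule.1 hx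
  rw [← aeval_mul_apply, aeval_apply_eq_zero_iff_pow_succ_dvd hf hv hv0, pow_succ',
    mul_dvd_mul_iff_left hf.ne_zero] at hfx
  obtain ⟨q, rfl⟩ := hfx
  rw [mul_comm, aeval_mul_apply]
  exact aeval_apply_mem hN q hvN

theorem exists_minpoly_restrict_eq_pow_succ_mul [FiniteDimensional F V]
    (hN : N ∈ X.invtSubmodule) (hne : N ≠ ⊥) :
    ∃ (f : F[X]) (n : ℕ) (h : F[X]), f.Monic ∧ Irreducible f ∧ IsCoprime f h ∧
      minpoly F (X.restrict hN) = f ^ (n + 1) * h ∧ ∃ y ∈ N, aeval X (f ^ n * h) y ≠ 0 := by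
  have : Nontrivial N := Submodule.nontrivial_iff_ne_bot.2 hne
  have hint : IsIntegral F (X.restrict hN) := Algebra.IsIntegral.isIntegral _
  have hμ0 := minpoly.ne_zero hint
  obtain ⟨f, n, h, hm, hf, hfh, hμ⟩ :=
    exists_monic_irreducible_pow_succ_mul hμ0 (minpoly.not_isUnit F _)
  refine ⟨f, n, h, hm, hf, hfh, hμ, ?_⟩
  by_contra! hann
  have hdvd := minpoly.dvd F _ ((aeval_restrict_eq_zero_iff hN).2 hann)
  have hh0 : h ≠ 0 := by rintro rfl; exact hμ0 (by rw [hμ, mul_zero])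
  rw [hμ, mul_dvd_mul_iff_right hh0, pow_dvd_pow_iff hf.ne_zero hf.not_isUnit] at hdvd
  exact absurd hdvd (by simp)

end Primary

section Orthogonal

variable {F V : Type*} [Field F] [AddCommGroup V] [Module F V] {σ : F ≃+* F}
  {B : V →ₗ[F] V →ₛₗ[(σ : F →+* F)] F} {N U W : Submodule F V}

theorem le_orthogonalBilin_comm (hB : B.IsRefl) :
    U ≤ W.orthogonalBilin B ↔ W ≤ U.orthogonalBilin B :=
  ⟨fun h w hw _ hu => hB _ _ (h hu w hw), fun h u hu _ hw => hB _ _ (h hw u hu)⟩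

theorem ker_pi_flip_eq_orthogonalBilin (hB : B.IsRefl) {ι : Type*} (b : Module.Basis ι F U) :
    LinearMap.ker (LinearMap.pi fun i => B.flip (b i : V)) = U.orthogonalBilin B := by
  ext x
  have hspan : U = Submodule.span F (Set.range fun i => (b i : V)) := by
    conv_lhs => rw [← U.range_subtype, ← Submodule.map_top, ← b.span_eq, Submodule.map_span,
      ← Set.range_comp]
    rfl
  have hx : U ≤ LinearMap.ker (B x) ↔ ∀ i, B x (b i) = 0 := by
    conv_lhs => rw [hspan, Submodule.span_le, Set.range_subset_iff]
    rfl
  simp only [LinearMap.mem_ker, funext_iff, LinearMap.pi_apply, LinearMap.flip_apply,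
    Pi.zero_apply, ← hx, Submodule.mem_orthogonalBilin_iff, SetLike.le_def]
  exact forall₂_congr fun _ _ => hB.eq_iff

theorem sup_orthogonalBilin_eq_top [FiniteDimensional F V] (hB : B.IsRefl)
    (hU : Disjoint U (U.orthogonalBilin B)) : U ⊔ U.orthogonalBilin B = ⊤ := by
  refine Submodule.eq_top_of_disjoint _ _ ?_ hU
  let b := Module.finBasis F U
  rw [← ker_pi_flip_eq_orthogonalBilin hB b,
    ← (LinearMap.pi fun i => B.flip (b i : V)).finrank_range_add_finrank_ker]
  gcongr
  exact (Submodule.finrank_le _).trans_eq (Module.finrank_fin_fun F)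

theorem sup_inf_orthogonalBilin_eq [FiniteDimensional F V] (hB : B.IsRefl) (hUN : U ≤ N)
    (hU : Disjoint U (U.orthogonalBilin B)) : U ⊔ N ⊓ U.orthogonalBilin B = N := by
  rw [inf_comm, ← sup_inf_assoc_of_le _ hUN, sup_orthogonalBilin_eq_top hB hU, top_inf_eq]

theorem disjoint_inf_orthogonalBilin [FiniteDimensional F V] (hB : B.IsRefl) (hUN : U ≤ N)
    (hU : Disjoint U (U.orthogonalBilin B)) (hN : Disjoint N (N.orthogonalBilin B)) :
    Disjoint (N ⊓ U.orthogonalBilin B) ((N ⊓ U.orthogonalBilin B).orthogonalBilin B) := by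
  refine Submodule.disjoint_def.2 fun x hx hx' => Submodule.disjoint_def.1 hN x hx.1 fun y hy => ?_
  rw [← sup_inf_orthogonalBilin_eq hB hUN hU] at hy
  obtain ⟨u, hu, z, hz, rfl⟩ := Submodule.mem_sup.1 hy
  rw [map_add, LinearMap.add_apply, hx.2 u hu, hx' z hz, add_zero]

theorem iSupIndep_of_pairwise_le_orthogonalBilin {ι : Type*} {U : ι → Submodule F V}
    (horth : Pairwise fun i j => U i ≤ (U j).orthogonalBilin B)
    (hU : ∀ i, Disjoint (U i) ((U i).orthogonalBilin B)) : iSupIndep U :=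
  fun i => (hU i).mono_right (iSup₂_le fun _ hj => horth hj)

end Orthogonal

section Isometry

variable {F V : Type*} [Field F] [AddCommGroup V] [Module F V] {σ : F ≃+* F}
  {B : V →ₗ[F] V →ₛₗ[(σ : F →+* F)] F} {X : Module.End F V} {N : Submodule F V}

theorem injective_of_isometry (hsep : B.SeparatingRight) (hXB : ∀ u v, B (X u) (X v) = B u v) :
    Function.Injective X :=
  (injective_iff_map_eq_zero X).2 fun v hv => hsep v fun u => by rw [← hXB, hv, map_zero]

theorem apply_pow_pow (hXB : ∀ u v, B (X u) (X v) = B u v) (n : ℕ) (u v : V) :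
    B ((X ^ n) u) ((X ^ n) v) = B u v := by
  induction n with
  | zero => simp
  | succ n ih => rw [pow_succ', Module.End.mul_apply, Module.End.mul_apply, hXB, ih]

theorem apply_pow_aeval_eq_reflect (hXB : ∀ u v, B (X u) (X v) = B u v) (d : ℕ) (p : F[X])
    (hp : p.natDegree ≤ d) (u v : V) :
    B ((X ^ d) u) (aeval X p v) = B (aeval X (reflect d (p.map (σ : F →+* F))) u) v := by
  refine Polynomial.induction_with_natDegree_le (fun p => B ((X ^ d) u) (aeval X p v) =
    B (aeval X (reflect d (p.map (σ : F →+* F))) u) v) d ?_ ?_ ?_ p hp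
  · simp
  · intro n r _ hn
    obtain ⟨k, rfl⟩ := Nat.exists_eq_add_of_le hn
    have h : revAt (n + k) n = k := by rw [revAt_le hn, Nat.add_sub_cancel_left]
    simp [h, pow_add, apply_pow_pow hXB, Module.algebraMap_end_apply]
  · intro p q _ _ hp hq
    simp [reflect_add, hp, hq]

theorem apply_pow_aeval_eq_sigmaDualPoly (hXB : ∀ u v, B (X u) (X v) = B u v) {p : F[X]}
    (hp : p.coeff 0 ≠ 0) (u v : V) :
    B ((X ^ p.natDegree) u) (aeval X p v) =
      σ (p.coeff 0) * B (aeval X (sigmaDualPoly σ p) u) v := by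
  have hσp : σ (p.coeff 0) ≠ 0 := by simpa using hp
  have hdeg : (p.map (σ : F →+* F)).natDegree = p.natDegree := natDegree_map _
  have hrev : (p.map (σ : F →+* F)).reverse = C (σ (p.coeff 0)) * sigmaDualPoly σ p := by
    rw [sigmaDualPoly, ← mul_assoc, ← C_mul, mul_inv_cancel₀ hσp, C_1, one_mul]
    rfl
  rw [apply_pow_aeval_eq_reflect hXB _ p le_rfl, ← hdeg, ← reverse, hrev, aeval_mul_apply,
    aeval_C, Module.algebraMap_end_apply, map_smul, LinearMap.smul_apply, smul_eq_mul]

theorem map_eq_self_of_mem_invtSubmodule [FiniteDimensional F V] (hX : Function.Injective X)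
    (hN : N ∈ X.invtSubmodule) : N.map X = N :=
  Submodule.eq_of_le_of_finrank_eq (Submodule.map_le_iff_le_comap.2 hN)
    (LinearEquiv.finrank_eq (Submodule.equivMapOfInjective X hX N)).symm

theorem exists_pow_apply_eq [FiniteDimensional F V] (hX : Function.Injective X)
    (hN : N ∈ X.invtSubmodule) (k : ℕ) {y : V} (hy : y ∈ N) : ∃ z ∈ N, (X ^ k) z = y := by
  have hXk : Function.Injective (X ^ k) := by
    rw [Module.End.coe_pow]
    exact hX.iterate k
  have hNk : N ∈ (X ^ k).invtSubmodule := fun x hx => by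
    simpa using aeval_apply_mem hN (Polynomial.X ^ k) hx
  rwa [← Submodule.mem_map, map_eq_self_of_mem_invtSubmodule hXk hNk]

theorem orthogonalBilin_mem_invtSubmodule [FiniteDimensional F V] (hX : Function.Injective X)
    (hXB : ∀ u v, B (X u) (X v) = B u v) (hN : N ∈ X.invtSubmodule) :
    N.orthogonalBilin B ∈ X.invtSubmodule := by
  intro x hx y hy
  obtain ⟨z, hz, rfl⟩ := exists_pow_apply_eq hX hN 1 hy
  rw [pow_one]
  exact (hXB z x).trans (hx z hz)

theorem apply_aeval_sigmaDualPoly_eq_zero (hXB : ∀ u v, B (X u) (X v) = B u v)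
    (hN : N ∈ X.invtSubmodule) {p : F[X]} (hp : p.coeff 0 ≠ 0) {u v : V} (hu : u ∈ N)
    (hv : aeval X p v ∈ N.orthogonalBilin B) : B (aeval X (sigmaDualPoly σ p) u) v = 0 := by
  have h := hv _ (aeval_apply_mem hN (Polynomial.X ^ p.natDegree) hu)
  rw [aeval_X_pow, apply_pow_aeval_eq_sigmaDualPoly hXB hp] at h
  simpa [hp] using h

theorem aeval_apply_mem_orthogonalBilin_iff [FiniteDimensional F V] (hX : Function.Injective X)
    (hXB : ∀ u v, B (X u) (X v) = B u v) (hN : N ∈ X.invtSubmodule) {p : F[X]}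
    (hp : p.coeff 0 ≠ 0) {v : V} :
    aeval X p v ∈ N.orthogonalBilin B ↔ ∀ u ∈ N, B (aeval X (sigmaDualPoly σ p) u) v = 0 := by
  refine ⟨fun hv u hu => apply_aeval_sigmaDualPoly_eq_zero hXB hN hp hu hv, fun h w hw => ?_⟩
  obtain ⟨u, hu, rfl⟩ := exists_pow_apply_eq hX hN p.natDegree hw
  rw [apply_pow_aeval_eq_sigmaDualPoly hXB hp, h u hu, mul_zero]

theorem aeval_sigmaDualPoly_apply_eq_zero (hB : B.IsRefl) (hXB : ∀ u v, B (X u) (X v) = B u v)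
    (hN : N ∈ X.invtSubmodule) (hnd : Disjoint N (N.orthogonalBilin B)) {p : F[X]}
    (hp : p.coeff 0 ≠ 0) (hpN : ∀ v ∈ N, aeval X p v = 0) {u : V} (hu : u ∈ N) :
    aeval X (sigmaDualPoly σ p) u = 0 :=
  Submodule.disjoint_def.1 hnd _ (aeval_apply_mem hN _ hu) fun v hv => hB _ _ <|
    apply_aeval_sigmaDualPoly_eq_zero hXB hN hp hu (hpN v hv ▸ zero_mem _)

theorem le_orthogonalBilin_self_of_aeval (hXB : ∀ u v, B (X u) (X v) = B u v)
    (hN : N ∈ X.invtSubmodule) {p : F[X]} (hp : p.coeff 0 ≠ 0)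
    (hcop : IsCoprime p (sigmaDualPoly σ p)) (hpN : ∀ v ∈ N, aeval X p v = 0) :
    N ≤ N.orthogonalBilin B := by
  intro v hv u hu
  obtain ⟨r, hr⟩ := exists_aeval_aeval_apply_eq_of_isCoprime hcop (hpN u hu)
  rw [← hr]
  exact apply_aeval_sigmaDualPoly_eq_zero hXB hN hp (aeval_apply_mem hN r hu)
    (hpN v hv ▸ zero_mem _)

theorem le_orthogonalBilin_self_of_aeval_sigmaDualPoly [FiniteDimensional F V]
    (hX : Function.Injective X) (hXB : ∀ u v, B (X u) (X v) = B u v) (hN : N ∈ X.invtSubmodule)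
    {p : F[X]} (hp : p.coeff 0 ≠ 0) (hcop : IsCoprime p (sigmaDualPoly σ p))
    (hpN : ∀ v ∈ N, aeval X (sigmaDualPoly σ p) v = 0) : N ≤ N.orthogonalBilin B := by
  intro v hv
  obtain ⟨r, hr⟩ := exists_aeval_aeval_apply_eq_of_isCoprime hcop.symm (hpN v hv)
  rw [← hr, aeval_apply_mem_orthogonalBilin_iff hX hXB hN hp]
  intro u hu
  rw [hpN u hu, map_zero, LinearMap.zero_apply]

end Isometry

section DualPair

variable {F V : Type*} [Field F] [AddCommGroup V] [Module F V] {σ : F ≃+* F}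
  {B : V →ₗ[F] V →ₛₗ[(σ : F →+* F)] F} {X : Module.End F V} {N W W' : Submodule F V} {f : F[X]}
  {n : ℕ} {v v' : V}

theorem disjoint_and_disjoint_sup_of_add_mem {U : Submodule F V}
    (h : ∀ a ∈ W, ∀ b ∈ W', a + b ∈ U → a = 0 ∧ b = 0) :
    Disjoint W W' ∧ Disjoint (W ⊔ W') U := by
  refine ⟨Submodule.disjoint_def.2 fun a ha ha' => ?_, Submodule.disjoint_def.2 fun x hx hxU => ?_⟩
  · exact (h a ha (-a) (neg_mem ha') (by rw [add_neg_cancel]; exact zero_mem U)).1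
  · obtain ⟨a, ha, b, hb, rfl⟩ := Submodule.mem_sup.1 hx
    obtain ⟨rfl, rfl⟩ := h a ha b hb hxU
    exact add_zero 0

theorem eq_zero_of_add_mem_orthogonalBilin_sup (hWW' : Disjoint W (W'.orthogonalBilin B))
    (hW'W : Disjoint W' (W.orthogonalBilin B)) {a b : V} (ha : a ∈ W)
    (ha' : a ∈ W.orthogonalBilin B) (hb : b ∈ W') (hb' : b ∈ W'.orthogonalBilin B)
    (hab : a + b ∈ (W ⊔ W').orthogonalBilin B) : a = 0 ∧ b = 0 := by
  have habW := Submodule.orthogonalBilin_le (le_sup_left : W ≤ W ⊔ W') hab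
  have habW' := Submodule.orthogonalBilin_le (le_sup_right : W' ≤ W ⊔ W') hab
  exact ⟨Submodule.disjoint_def.1 hWW' a ha ((add_mem_cancel_right hb').1 habW'),
    Submodule.disjoint_def.1 hW'W b hb ((add_mem_cancel_left ha').1 habW)⟩

/-- Generators `v` and `v'` of two primary cyclic submodules, of exponents `f ^ (n + 1)` and
`f* ^ (n + 1)`, whose pairing under `B` is nondegenerate. Nondegeneracy is encoded by the single
condition that the socle vector `f ^ n v` is not orthogonal to the submodule generated by `v'`. -/
structure IsDualPair (B : V →ₗ[F] V →ₛₗ[(σ : F →+* F)] F) (X : Module.End F V) (f : F[X]) (n : ℕ)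
    (v v' : V) : Prop where
  pow_succ_apply_left : aeval X (f ^ (n + 1)) v = 0
  pow_succ_apply_right : aeval X (sigmaDualPoly σ f ^ (n + 1)) v' = 0
  pow_apply_left_notMem : aeval X (f ^ n) v ∉ (cyclicSubmodule X v').orthogonalBilin B

namespace IsDualPair

theorem pow_apply_left_ne_zero (h : IsDualPair B X f n v v') : aeval X (f ^ n) v ≠ 0 :=
  fun h0 => h.pow_apply_left_notMem (h0 ▸ zero_mem _)

theorem sigmaDualPoly_eq_self (hm : f.Monic) (hf : Irreducible f) (h0 : f.coeff 0 ≠ 0)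
    (h : IsDualPair B X f n v v) : sigmaDualPoly σ f = f := by
  by_contra hne
  have hv := eq_zero_of_isCoprime_of_aeval_apply_eq_zero
    (isCoprime_sigmaDualPoly σ hm hf h0 hne).pow h.pow_succ_apply_left h.pow_succ_apply_right
  exact h.pow_apply_left_ne_zero (by rw [hv, map_zero])

variable [FiniteDimensional F V]

theorem pow_apply_right_notMem (hX : Function.Injective X) (hB : B.IsRefl)
    (hXB : ∀ u v, B (X u) (X v) = B u v) (h0 : f.coeff 0 ≠ 0) (h : IsDualPair B X f n v v') :
    aeval X (sigmaDualPoly σ f ^ n) v' ∉ (cyclicSubmodule X v).orthogonalBilin B := by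
  intro hv'
  refine h.pow_apply_left_notMem ?_
  rw [aeval_apply_mem_orthogonalBilin_iff hX hXB (cyclicSubmodule_mem_invtSubmodule X v')
    (coeff_zero_pow_ne_zero h0 n), sigmaDualPoly_pow]
  have hN := orthogonalBilin_mem_invtSubmodule hX hXB (cyclicSubmodule_mem_invtSubmodule X v)
  intro u hu
  obtain ⟨q, rfl⟩ := mem_cyclicSubmodule.1 hu
  rw [aeval_apply_comm]
  exact hB _ _ (aeval_apply_mem hN q hv' v (self_mem_cyclicSubmodule X v))

theorem pow_apply_right_ne_zero (hX : Function.Injective X) (hB : B.IsRefl)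
    (hXB : ∀ u v, B (X u) (X v) = B u v) (h0 : f.coeff 0 ≠ 0) (h : IsDualPair B X f n v v') :
    aeval X (sigmaDualPoly σ f ^ n) v' ≠ 0 :=
  fun hv' => h.pow_apply_right_notMem hX hB hXB h0 (hv' ▸ zero_mem _)

theorem disjoint_left (hX : Function.Injective X) (hXB : ∀ u v, B (X u) (X v) = B u v)
    (hf : Irreducible f) (h : IsDualPair B X f n v v') :
    Disjoint (cyclicSubmodule X v) ((cyclicSubmodule X v').orthogonalBilin B) :=
  disjoint_cyclicSubmodule_of_pow_apply_notMem hf h.pow_succ_apply_left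
    (orthogonalBilin_mem_invtSubmodule hX hXB (cyclicSubmodule_mem_invtSubmodule X v'))
    h.pow_apply_left_notMem

theorem disjoint_right (hX : Function.Injective X) (hB : B.IsRefl)
    (hXB : ∀ u v, B (X u) (X v) = B u v) (hf : Irreducible f) (h0 : f.coeff 0 ≠ 0)
    (h : IsDualPair B X f n v v') :
    Disjoint (cyclicSubmodule X v') ((cyclicSubmodule X v).orthogonalBilin B) :=
  disjoint_cyclicSubmodule_of_pow_apply_notMem (irreducible_sigmaDualPoly σ hf h0)
    h.pow_succ_apply_right
    (orthogonalBilin_mem_invtSubmodule hX hXB (cyclicSubmodule_mem_invtSubmodule X v))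
    (h.pow_apply_right_notMem hX hB hXB h0)

theorem eq_zero_of_add_mem_of_ne (hX : Function.Injective X) (hB : B.IsRefl)
    (hXB : ∀ u v, B (X u) (X v) = B u v) (hm : f.Monic) (hf : Irreducible f)
    (h0 : f.coeff 0 ≠ 0) (hne : sigmaDualPoly σ f ≠ f) (h : IsDualPair B X f n v v') {a b : V}
    (ha : a ∈ cyclicSubmodule X v) (hb : b ∈ cyclicSubmodule X v')
    (hab : a + b ∈ (cyclicSubmodule X v ⊔ cyclicSubmodule X v').orthogonalBilin B) :
    a = 0 ∧ b = 0 := by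
  have hcop : IsCoprime (f ^ (n + 1)) (sigmaDualPoly σ (f ^ (n + 1))) := by
    rw [sigmaDualPoly_pow]
    exact (isCoprime_sigmaDualPoly σ hm hf h0 hne).pow
  have hp := coeff_zero_pow_ne_zero h0 (n + 1)
  have hv := le_orthogonalBilin_self_of_aeval hXB (cyclicSubmodule_mem_invtSubmodule X v) hp hcop
    fun _ => aeval_apply_eq_zero_of_mem_cyclicSubmodule h.pow_succ_apply_left
  have hv' := le_orthogonalBilin_self_of_aeval_sigmaDualPoly hX hXB
    (cyclicSubmodule_mem_invtSubmodule X v') hp hcop fun _ =>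
      aeval_apply_eq_zero_of_mem_cyclicSubmodule
        (by rw [sigmaDualPoly_pow]; exact h.pow_succ_apply_right)
  exact eq_zero_of_add_mem_orthogonalBilin_sup (h.disjoint_left hX hXB hf)
    (h.disjoint_right hX hB hXB hf h0) ha (hv ha) hb (hv' hb) hab

theorem eq_zero_of_add_mem_of_eq (hX : Function.Injective X) (hB : B.IsRefl)
    (hXB : ∀ u v, B (X u) (X v) = B u v) (hf : Irreducible f) (h0 : f.coeff 0 ≠ 0)
    (hdual : sigmaDualPoly σ f = f) (h : IsDualPair B X f n v v')
    (hv : ¬ IsDualPair B X f n v v) (hv' : ¬ IsDualPair B X f n v' v') {a b : V}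
    (ha : a ∈ cyclicSubmodule X v) (hb : b ∈ cyclicSubmodule X v')
    (hab : a + b ∈ (cyclicSubmodule X v ⊔ cyclicSubmodule X v').orthogonalBilin B) :
    a = 0 ∧ b = 0 := by
  have hinv (u : V) := cyclicSubmodule_mem_invtSubmodule X u
  have hkill := h.pow_succ_apply_left
  have hkill' := h.pow_succ_apply_right
  have hne' := h.pow_apply_right_ne_zero hX hB hXB h0
  rw [hdual] at hkill' hne'
  have hsocle {u : V} (hu : aeval X (f ^ (n + 1)) u = 0) (hself : ¬ IsDualPair B X f n u u) :
      aeval X (f ^ n) u ∈ (cyclicSubmodule X u).orthogonalBilin B :=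
    of_not_not fun hmem => hself ⟨hu, by rwa [hdual], hmem⟩
  suffices ∀ k, aeval X (f ^ k) a = 0 ∧ aeval X (f ^ k) b = 0 → a = 0 ∧ b = 0 from
    this (n + 1) ⟨aeval_apply_eq_zero_of_mem_cyclicSubmodule hkill ha,
      aeval_apply_eq_zero_of_mem_cyclicSubmodule hkill' hb⟩
  intro k
  induction k with
  | zero => simp
  | succ k ih =>
    rintro ⟨hak, hbk⟩
    rw [pow_succ', aeval_mul_apply] at hak hbk
    have hak_mem := aeval_apply_mem (hinv v) (f ^ k) ha
    have hbk_mem := aeval_apply_mem (hinv v') (f ^ k) hb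
    have habk := aeval_apply_mem (orthogonalBilin_mem_invtSubmodule hX hXB
      (Module.End.invtSubmodule.sup_mem (hinv v) (hinv v'))) (f ^ k) hab
    rw [map_add] at habk
    -- Both vectors are killed by `f`, so they are socle vectors, orthogonal to `v` resp. `v'`.
    exact ih <| eq_zero_of_add_mem_orthogonalBilin_sup (h.disjoint_left hX hXB hf)
      (h.disjoint_right hX hB hXB hf h0) hak_mem
      (mem_of_mem_cyclicSubmodule_of_aeval_apply_eq_zero hf hkill h.pow_apply_left_ne_zero
        (orthogonalBilin_mem_invtSubmodule hX hXB (hinv v)) (hsocle hkill hv) hak_mem hak) hbk_mem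
      (mem_of_mem_cyclicSubmodule_of_aeval_apply_eq_zero hf hkill' hne'
        (orthogonalBilin_mem_invtSubmodule hX hXB (hinv v')) (hsocle hkill' hv') hbk_mem hbk) habk

end IsDualPair

theorem exists_isDualPair [FiniteDimensional F V] (hX : Function.Injective X) (hB : B.IsRefl)
    (hXB : ∀ u v, B (X u) (X v) = B u v) (hN : N ∈ X.invtSubmodule)
    (hnd : Disjoint N (N.orthogonalBilin B)) (hne : N ≠ ⊥) :
    ∃ (f : F[X]) (n : ℕ), f.Monic ∧ Irreducible f ∧ f.coeff 0 ≠ 0 ∧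
      ∃ v ∈ N, ∃ v' ∈ N, IsDualPair B X f n v v' := by
  obtain ⟨f, n, h, hm, hf, hfh, hμ, y, hy, hy0⟩ := exists_minpoly_restrict_eq_pow_succ_mul hN hne
  have hkill : ∀ x ∈ N, aeval X (f ^ (n + 1) * h) x = 0 :=
    (aeval_restrict_eq_zero_iff hN).1 (hμ ▸ minpoly.aeval _ _)
  have hμ0 : (f ^ (n + 1) * h).coeff 0 ≠ 0 := hμ ▸ LinearMap.minpoly_coeff_zero_of_injective
    fun x y hxy => Subtype.ext (hX (congrArg Subtype.val hxy))
  have h0 : f.coeff 0 ≠ 0 ∧ h.coeff 0 ≠ 0 := by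
    refine ⟨fun hf0 => hμ0 ?_, fun hh0 => hμ0 (by rw [mul_coeff_zero, hh0, mul_zero])⟩
    rw [pow_succ', mul_assoc, mul_coeff_zero, hf0, zero_mul]
  rw [aeval_mul_apply] at hy0
  set w := aeval X (f ^ n) (aeval X h y) with hw
  have hwN : w ∈ N := aeval_apply_mem hN _ (aeval_apply_mem hN _ hy)
  have hfw : aeval X f w = 0 := by
    rw [hw, ← aeval_mul_apply, ← pow_succ', ← aeval_mul_apply, hkill y hy]
  obtain ⟨z, hz, hzw⟩ : ∃ z ∈ N, B (aeval X (sigmaDualPoly σ h) z) w ≠ 0 := by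
    by_contra! horth
    have hhw := (aeval_apply_mem_orthogonalBilin_iff hX hXB hN h0.2).2 horth
    exact hy0 <| eq_zero_of_isCoprime_of_aeval_apply_eq_zero hfh hfw <|
      Submodule.disjoint_def.1 hnd _ (aeval_apply_mem hN h hwN) hhw
  refine ⟨f, n, hm, hf, h0.1, aeval X h y, aeval_apply_mem hN h hy,
    aeval X (sigmaDualPoly σ h) z, aeval_apply_mem hN _ hz, ?_, ?_, fun hmem => ?_⟩
  · rw [← aeval_mul_apply, hkill y hy]
  · rw [← aeval_mul_apply, ← sigmaDualPoly_pow, ← sigmaDualPoly_mul]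
    exact aeval_sigmaDualPoly_apply_eq_zero hB hXB hN hnd hμ0 hkill hz
  · exact hzw (hmem _ (self_mem_cyclicSubmodule X _))

end DualPair

section Block

variable {F V : Type*} [Field F] [AddCommGroup V] [Module F V] {σ : F ≃+* F}
  {B : V →ₗ[F] V →ₛₗ[(σ : F →+* F)] F} {X : Module.End F V} {N : Submodule F V} {f : F[X]}
  {n : ℕ} {v v' : V}

/-- An `X`-invariant subspace that is either cyclic with minimal polynomial a power of a self-dual
irreducible polynomial, or the direct sum of two cyclic submodules with dual minimal polynomials. -/
def IsOrthogonalBlock (σ : F ≃+* F) (X : V →ₗ[F] V) (U : Submodule F V) : Prop :=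
  ∃ hinv : ∀ x ∈ U, X x ∈ U,
    (IsCyclicSub X U ∧
      ∃ (f : F[X]) (e : ℕ), f.Monic ∧ Irreducible f ∧ f.coeff 0 ≠ 0 ∧
        sigmaDualPoly σ f = f ∧ 1 ≤ e ∧ minpoly F (X.restrict hinv) = f ^ e)
    ∨
    (∃ (W W' : Submodule F V) (hW : ∀ x ∈ W, X x ∈ W) (hW' : ∀ x ∈ W', X x ∈ W'),
      U = W ⊔ W' ∧ W ⊓ W' = ⊥ ∧ IsCyclicSub X W ∧ IsCyclicSub X W' ∧
      ∃ (f : F[X]) (e : ℕ), f.Monic ∧ Irreducible f ∧ f.coeff 0 ≠ 0 ∧ 1 ≤ e ∧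
        minpoly F (X.restrict hW) = f ^ e ∧
        minpoly F (X.restrict hW') = (sigmaDualPoly σ f) ^ e)

theorem IsDualPair.isOrthogonalBlock_cyclicSubmodule (hm : f.Monic) (hf : Irreducible f)
    (h0 : f.coeff 0 ≠ 0) (h : IsDualPair B X f n v v) :
    IsOrthogonalBlock σ X (cyclicSubmodule X v) :=
  ⟨cyclicSubmodule_mem_invtSubmodule X v, .inl ⟨isCyclicSub_cyclicSubmodule X v, f, n + 1, hm, hf,
    h0, h.sigmaDualPoly_eq_self hm hf h0, n.succ_pos,
    minpoly_restrict_cyclicSubmodule hm hf h.pow_succ_apply_left h.pow_apply_left_ne_zero _⟩⟩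

variable [FiniteDimensional F V]

theorem IsDualPair.isOrthogonalBlock_sup (hX : Function.Injective X) (hB : B.IsRefl)
    (hXB : ∀ u v, B (X u) (X v) = B u v) (hm : f.Monic) (hf : Irreducible f)
    (h0 : f.coeff 0 ≠ 0) (h : IsDualPair B X f n v v')
    (hdisj : Disjoint (cyclicSubmodule X v) (cyclicSubmodule X v')) :
    IsOrthogonalBlock σ X (cyclicSubmodule X v ⊔ cyclicSubmodule X v') := by
  have hinv (u : V) := cyclicSubmodule_mem_invtSubmodule X u
  exact ⟨Module.End.invtSubmodule.sup_mem (hinv v) (hinv v'), .inr ⟨_, _, hinv v, hinv v', rfl,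
    hdisj.eq_bot, isCyclicSub_cyclicSubmodule X v, isCyclicSub_cyclicSubmodule X v', f, n + 1,
    hm, hf, h0, n.succ_pos,
    minpoly_restrict_cyclicSubmodule hm hf h.pow_succ_apply_left h.pow_apply_left_ne_zero _,
    minpoly_restrict_cyclicSubmodule (monic_sigmaDualPoly σ h0) (irreducible_sigmaDualPoly σ hf h0)
      h.pow_succ_apply_right (h.pow_apply_right_ne_zero hX hB hXB h0) _⟩⟩

theorem exists_isOrthogonalBlock_le (hX : Function.Injective X) (hB : B.IsRefl)
    (hXB : ∀ u v, B (X u) (X v) = B u v) (hN : N ∈ X.invtSubmodule)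
    (hnd : Disjoint N (N.orthogonalBilin B)) (hne : N ≠ ⊥) :
    ∃ U ≤ N, U ≠ ⊥ ∧ Disjoint U (U.orthogonalBilin B) ∧ IsOrthogonalBlock σ X U := by
  obtain ⟨f, n, hm, hf, h0, v, hvN, v', hvN', h⟩ := exists_isDualPair hX hB hXB hN hnd hne
  have hbot {u u' : V} (hu : IsDualPair B X f n u u') : cyclicSubmodule X u ≠ ⊥ :=
    (Submodule.ne_bot_iff _).2
      ⟨_, aeval_apply_mem_cyclicSubmodule X (f ^ n) u, hu.pow_apply_left_ne_zero⟩
  by_cases hself : ∃ u ∈ N, IsDualPair B X f n u u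
  · obtain ⟨u, huN, hu⟩ := hself
    exact ⟨cyclicSubmodule X u, cyclicSubmodule_le hN huN, hbot hu, hu.disjoint_left hX hXB hf,
      hu.isOrthogonalBlock_cyclicSubmodule hm hf h0⟩
  · push Not at hself
    have hzero (a : V) (ha : a ∈ cyclicSubmodule X v) (b : V) (hb : b ∈ cyclicSubmodule X v')
        (hab : a + b ∈ (cyclicSubmodule X v ⊔ cyclicSubmodule X v').orthogonalBilin B) :
        a = 0 ∧ b = 0 := by
      by_cases hdual : sigmaDualPoly σ f = f
      · exact h.eq_zero_of_add_mem_of_eq hX hB hXB hf h0 hdual (hself v hvN) (hself v' hvN')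
          ha hb hab
      · exact h.eq_zero_of_add_mem_of_ne hX hB hXB hm hf h0 hdual ha hb hab
    obtain ⟨hdisj, hsup⟩ := disjoint_and_disjoint_sup_of_add_mem hzero
    exact ⟨_, sup_le (cyclicSubmodule_le hN hvN) (cyclicSubmodule_le hN hvN'),
      fun hsup_bot => hbot h (sup_eq_bot_iff.1 hsup_bot).1, hsup,
      h.isOrthogonalBlock_sup hX hB hXB hm hf h0 hdisj⟩

end Block

section Decomposition

theorem iSup_fin_cons {α : Type*} [CompleteLattice α] {k : ℕ} (a : α) (g : Fin k → α) :
    ⨆ i, (Fin.cons a g : Fin (k + 1) → α) i = a ⊔ ⨆ i, g i :=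
  eq_of_forall_ge_iff fun c => by simp [iSup_le_iff, Fin.forall_fin_succ]

variable {F V : Type*} [Field F] [AddCommGroup V] [Module F V] [FiniteDimensional F V]
  {σ : F ≃+* F} {B : V →ₗ[F] V →ₛₗ[(σ : F →+* F)] F} {X : Module.End F V}

theorem exists_pairwise_le_orthogonalBilin_iSup_eq (hX : Function.Injective X) (hB : B.IsRefl)
    (hXB : ∀ u v, B (X u) (X v) = B u v) {P : Submodule F V → Prop}
    (hPinv : ∀ U, P U → U ∈ X.invtSubmodule)
    (hP : ∀ N ∈ X.invtSubmodule, Disjoint N (N.orthogonalBilin B) → N ≠ ⊥ →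
      ∃ U ≤ N, U ≠ ⊥ ∧ Disjoint U (U.orthogonalBilin B) ∧ P U)
    (N : Submodule F V) (hN : N ∈ X.invtSubmodule) (hnd : Disjoint N (N.orthogonalBilin B)) :
    ∃ (k : ℕ) (U : Fin k → Submodule F V), ⨆ i, U i = N ∧
      (Pairwise fun i j => U i ≤ (U j).orthogonalBilin B) ∧
      ∀ i, Disjoint (U i) ((U i).orthogonalBilin B) ∧ P (U i) := by
  induction N using WellFoundedLT.induction with
  | ind N ih =>
  by_cases hne : N = ⊥
  · exact ⟨0, Fin.elim0, by simp [hne], fun i => i.elim0, fun i => i.elim0⟩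
  obtain ⟨W, hWN, hW0, hW, hPW⟩ := hP N hN hnd hne
  have hlt : N ⊓ W.orthogonalBilin B < N := inf_le_left.lt_of_ne fun h =>
    hW0 (hW.eq_bot_of_le (hWN.trans (inf_eq_left.1 h)))
  obtain ⟨k, U, hUsup, horth, hU⟩ := ih _ hlt
    (Module.End.invtSubmodule.inf_mem hN (orthogonalBilin_mem_invtSubmodule hX hXB (hPinv W hPW)))
    (disjoint_inf_orthogonalBilin hB hWN hW hnd)
  have hUW (i : Fin k) : U i ≤ W.orthogonalBilin B :=
    (le_iSup U i).trans (hUsup.trans_le inf_le_right)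
  refine ⟨k + 1, Fin.cons W U, ?_, ?_, Fin.forall_fin_succ.2 ⟨⟨hW, hPW⟩, hU⟩⟩
  · rw [iSup_fin_cons, hUsup, sup_inf_orthogonalBilin_eq hB hWN hW]
  · exact pairwise_fin_succ_iff.2 ⟨hUW, fun i => (le_orthogonalBilin_comm hB).1 (hUW i), horth⟩

theorem orthogonal_decomposition_of_isometry_general
    (B : V →ₗ[F] V →ₛₗ[(σ : F →+* F)] F) (hB : B.IsRefl) (hsep : B.SeparatingRight)
    (X : V →ₗ[F] V) (hXB : ∀ u v, B (X u) (X v) = B u v) :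
    ∃ (k : ℕ) (U : Fin k → Submodule F V), DirectSum.IsInternal U ∧
      (∀ i j, i ≠ j → ∀ u ∈ U i, ∀ v ∈ U j, B u v = 0) ∧ ∀ i, IsOrthogonalBlock σ X (U i) := by
  have hX := injective_of_isometry hsep hXB
  have htop : Disjoint (⊤ : Submodule F V) ((⊤ : Submodule F V).orthogonalBilin B) :=
    Submodule.disjoint_def.2 fun v _ hv => hsep v fun u => hv u trivial
  obtain ⟨k, U, hsup, horth, hU⟩ := exists_pairwise_le_orthogonalBilin_iSup_eq hX hB hXB
    (P := IsOrthogonalBlock σ X) (fun _ h => h.1)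
    (fun _ => exists_isOrthogonalBlock_le hX hB hXB) ⊤ (Module.End.invtSubmodule.top_mem X) htop
  exact ⟨k, U, (DirectSum.isInternal_submodule_iff_iSupIndep_and_iSup_eq_top U).2
    ⟨iSupIndep_of_pairwise_le_orthogonalBilin horth fun i => (hU i).1, hsup⟩,
    fun i j hij u hu v hv => horth hij.symm hv u hu, fun i => (hU i).2⟩

end Decomposition

/-- An invertible isometry of a nondegenerate reflexive σ-sesquilinear form on a nonzero
finite-dimensional space decomposes the space into a pairwise-orthogonal internal direct
sum of `X`-invariant subspaces, each of which is either a cyclic `F[X]`-module with minimal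
polynomial `f^e`, `f` irreducible self-dual with `f(0) ≠ 0`, or a direct sum `W ⊕ W'` of
cyclic `F[X]`-modules with minimal polynomials `f^e` and `(f*)^e`, `f` irreducible with
`f(0) ≠ 0`. -/
theorem orthogonal_decomposition_of_isometry
    {F V : Type*} [Field F] [Fintype F] [AddCommGroup V] [Module F V]
    [FiniteDimensional F V] [Nontrivial V]
    (σ : F ≃+* F) (hσ : ∀ a, σ (σ a) = a)
    (β : V → V → F)
    (hβ_addl : ∀ u₁ u₂ v, β (u₁ + u₂) v = β u₁ v + β u₂ v)
    (hβ_addr : ∀ u v₁ v₂, β u (v₁ + v₂) = β u v₁ + β u v₂)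
    (hβ_smull : ∀ (a : F) (u v : V), β (a • u) v = a * β u v)
    (hβ_smulr : ∀ (a : F) (u v : V), β u (a • v) = σ a * β u v)
    (hβ_refl : ∀ u v, β u v = 0 ↔ β v u = 0)
    (hβ_nd : ∀ v, (∀ u, β u v = 0) → v = 0)
    (X : V →ₗ[F] V) (hX : IsUnit X)
    (hXiso : ∀ u v, β (X u) (X v) = β u v) :
    ∃ (k : ℕ) (U : Fin k → Submodule F V),
      DirectSum.IsInternal U ∧
      (∀ i j, i ≠ j → ∀ u ∈ U i, ∀ v ∈ U j, β u v = 0) ∧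
      (∀ i, ∃ hinv : ∀ x ∈ U i, X x ∈ U i,
        (IsCyclicSub X (U i) ∧
          ∃ (f : Polynomial F) (e : ℕ), f.Monic ∧ Irreducible f ∧ f.coeff 0 ≠ 0 ∧
            sigmaDualPoly σ f = f ∧ 1 ≤ e ∧ minpoly F (X.restrict hinv) = f ^ e)
        ∨
        (∃ (W W' : Submodule F V) (hW : ∀ x ∈ W, X x ∈ W) (hW' : ∀ x ∈ W', X x ∈ W'),
          U i = W ⊔ W' ∧ W ⊓ W' = ⊥ ∧ IsCyclicSub X W ∧ IsCyclicSub X W' ∧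
          ∃ (f : Polynomial F) (e : ℕ), f.Monic ∧ Irreducible f ∧ f.coeff 0 ≠ 0 ∧ 1 ≤ e ∧
            minpoly F (X.restrict hW) = f ^ e ∧
            minpoly F (X.restrict hW') = (sigmaDualPoly σ f) ^ e)) :=
  orthogonal_decomposition_of_isometry_general
    (LinearMap.mk₂'ₛₗ (RingHom.id F) (σ : F →+* F) β hβ_addl hβ_smull hβ_addr hβ_smulr)
    (fun u v => (hβ_refl u v).1) hβ_nd X hXiso
end

section
/- Let q be a prime power, K the field with q² elements with Frobenius automorphism σ(a) = a^q, and let X ∈ M_n(K) be invertible. Then there exists an invertible hermitian matrix B ∈ M_n(K) (that is, B* = B) with X·B·X* = B if and only if X is similar to (X*)⁻¹. -/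
open Matrix

/-- For a matrix over the field `K` with `q²` elements, `X* = (σX)ᵀ` where `σ(a) = a^q`
is the Frobenius automorphism. -/
def hermStar {K : Type*} [Field K] {n : ℕ} (q : ℕ) (X : Matrix (Fin n) (Fin n) K) :
    Matrix (Fin n) (Fin n) K :=
  (X.map fun a => a ^ q)ᵀ

/-!
If `X P X* = P` with `P` invertible, put `t = P* P⁻¹`. Then `t` commutes with `X`, so that every
`B = u P` with `u ∈ K[t]` satisfies `X B X* = B`, and `a P + (a P)*` is a hermitian matrix of this
form for each `a ∈ K[t]`. It remains to choose `a` so that it is invertible. On the part of `K[t]`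
where `1 + t` is invertible take `a = 1`, which gives `(1 + t) P`. On the part where `1 + t` is
nilpotent take a scalar `a = c` with `c - c*` invertible: this gives `(c + c* t) P`, where
`c + c* t` differs from `c - c*` by a nilpotent element. The Fitting idempotent of `1 + t`, which
cuts out the two parts, is compatible with `*`, so the two choices can be combined.
-/

section Fitting

variable {A : Type*} [CommRing A]

theorem exists_isIdempotentElem_dvd_pow [IsArtinianRing A] (a : A) :
    ∃ e, IsIdempotentElem e ∧ ∃ n ≠ 0, a ^ n ∣ e ∧ e ∣ a ^ n := by
  obtain ⟨n, hn⟩ := IsArtinian.range_smul_pow_stabilizes A a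
  have hspan (m : ℕ) (hm : n ≤ m) : Ideal.span {a ^ m} = Ideal.span {a ^ n} := by
    ext x
    simpa [Ideal.mem_span_singleton, dvd_iff_exists_eq_mul_right, eq_comm] using
      (SetLike.ext_iff.1 (hn m hm) x).symm
  have hidem : IsIdempotentElem (Ideal.span {a ^ (n + 1)}) := by
    rw [IsIdempotentElem, Ideal.span_singleton_mul_span_singleton, ← pow_add,
      hspan _ (by omega), hspan _ n.le_succ]
  obtain ⟨e, he, hae⟩ := (Ideal.isIdempotentElem_iff_of_fg _ ⟨{a ^ (n + 1)}, by simp⟩).1 hidem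
  exact ⟨e, he, n + 1, n.succ_ne_zero, Ideal.span_singleton_le_span_singleton.1 hae.ge,
    Ideal.span_singleton_le_span_singleton.1 hae.le⟩

theorem isUnit_mul_add_one_sub_mul {e b d : A} (he : IsIdempotentElem e) (hb : b ∣ e)
    (hd : IsUnit d) : IsUnit (e * b + (1 - e) * d) := by
  obtain ⟨y, hy⟩ := hb
  obtain ⟨z, hz⟩ := hd.exists_right_inv
  refine IsUnit.of_mul_eq_one (e * y + (1 - e) * z) ?_
  linear_combination (1 + (b - d) * (y - z)) * he.eq - e * hy + (1 - e) * hz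

theorem isUnit_mul_add_one_sub_mul_add {e b d : A} {n : ℕ} (he : IsIdempotentElem e) (hn : n ≠ 0)
    (hbe : b ^ n ∣ e) (heb : e ∣ b ^ n) (hd : IsUnit d) (r : A) :
    IsUnit (e * b + (1 - e) * (d + b * r)) := by
  have hnil : IsNilpotent ((1 - e) * b * r) := by
    obtain ⟨y, hy⟩ := heb
    refine (Commute.all _ _).isNilpotent_mul_right ⟨n, ?_⟩
    rw [mul_pow, he.one_sub.pow_eq hn, hy, ← mul_assoc, he.one_sub_mul_self, zero_mul]
  have hunit := isUnit_mul_add_one_sub_mul he ((dvd_pow_self b hn).trans hbe) hd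
  convert hnil.isUnit_add_left_of_commute hunit (Commute.all _ _) using 1
  ring

end Fitting

section Cosquare

variable {G : Type*} [Group G] [StarMul G]

/-- The cosquare (or asymmetry) `P* P⁻¹` of a nondegenerate sesquilinear form with Gram matrix `P`:
it measures how far the form is from being hermitian, since it is `1` exactly when `P* = P`. -/
def cosquare (P : G) : G := star P * P⁻¹

theorem cosquare_mul_self (P : G) : cosquare P * P = star P :=
  inv_mul_cancel_right _ _

theorem mul_star_cosquare (P : G) : P * star (cosquare P) = (cosquare P)⁻¹ * P := by
  simp [cosquare, mul_assoc]

theorem commute_cosquare {x P : G} (h : x * P * star x = P) : Commute x (cosquare P) := by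
  have h_star : x * star P * star x = star P := by
    simpa [mul_assoc] using congrArg star h
  calc x * cosquare P = x * star P * star x * (x * P * star x)⁻¹ * x := by
        simp only [cosquare]; group
    _ = cosquare P * x := by rw [h, h_star, cosquare]

end Cosquare

section StarAlgebra

variable {R : Type*} [Ring R] [StarRing R]

theorem star_coe_eq_cosquare_mul (P : Rˣ) : star (P : R) = (cosquare P : Rˣ) * P :=
  congrArg Units.val (cosquare_mul_self P).symm

theorem mul_star_one_add_cosquare_pow (P : Rˣ) (n : ℕ) :
    P * star ((1 + ↑(cosquare P) : R) ^ n) =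
      ↑((cosquare P)⁻¹ ^ n) * (1 + ↑(cosquare P)) ^ n * P := by
  set t := cosquare P
  have hstar : (P : R) * star (t : R) = ↑t⁻¹ * P := congrArg Units.val (mul_star_cosquare P)
  have hsemi : SemiconjBy (P : R) (star (1 + ↑t)) (↑t⁻¹ * (1 + ↑t)) := by
    simp [SemiconjBy, mul_add, add_mul, hstar, add_comm]
  have hcomm : Commute (↑t⁻¹ : R) (1 + ↑t) :=
    (Commute.one_right _).add_right (Commute.refl (t : R)).units_inv_left
  rw [star_pow, (hsemi.pow_right n).eq, hcomm.mul_pow, Units.val_pow_eq_pow_val]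

theorem mul_eq_mul_star_of_commute_cosquare {P : Rˣ} {e y : R} {n : ℕ}
    (hcomm : Commute e ↑(cosquare P)) (hy : e = y * (1 + ↑(cosquare P)) ^ n)
    (hfix : e * (1 + ↑(cosquare P)) ^ n = (1 + ↑(cosquare P)) ^ n) :
    e * P = P * star e := by
  set t := cosquare P with ht
  have hcomm_inv : Commute e ↑(t⁻¹ ^ n) := by
    simpa using hcomm.units_inv_right.pow_right n
  have habsorb : e * (P * star e) = P * star e := calc
    e * (P * star e) = e * (P * star ((1 + ↑t) ^ n)) * star y := by
      conv_lhs => enter [2, 2]; rw [hy, star_mul]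
      simp only [mul_assoc]
    _ = P * star ((1 + ↑t) ^ n) * star y := by
      rw [mul_star_one_add_cosquare_pow, ← ht, ← mul_assoc, ← mul_assoc e, hcomm_inv.eq,
        mul_assoc _ e, hfix]
    _ = P * star e := by rw [mul_assoc, ← star_mul, ← hy]
  -- Applying `*` and cancelling `P* = t P` turns `e P e* = P e*` into `e P e* = e P`.
  have habsorb_star : t * (e * (P * star e)) = t * (e * P) := by
    simpa [star_coe_eq_cosquare_mul, ← ht, mul_assoc, ← hcomm.left_comm] using congrArg star habsorb
  rw [← habsorb, (Units.mul_right_inj t).1 habsorb_star]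

variable {K : Type*} [CommRing K] [IsArtinianRing K] [Algebra K R] [Algebra.IsIntegral K R]

open scoped IsMulCommutative in
/- For `d = star c` and `a = e + c • (1 - e)`, the unit obtained here times `P` is the
self-adjoint element `a * P + star (a * P)`. -/
theorem exists_mul_eq_mul_star_and_isUnit_add_cosquare_mul (P : Rˣ) {c d : K}
    (hcd : IsUnit (c - d)) :
    ∃ e ∈ Algebra.adjoin K {((cosquare P : Rˣ) : R)}, e * P = P * star e ∧
      IsUnit ((e + c • (1 - e)) + (cosquare P : Rˣ) * (e + d • (1 - e))) := by
  set A := Algebra.adjoin K {((cosquare P : Rˣ) : R)}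
  have : Module.Finite K A := Algebra.finite_adjoin_simple_of_isIntegral
    (Algebra.IsIntegral.isIntegral _)
  have : IsArtinianRing A := .of_finite K A
  let t : A := ⟨(cosquare P : Rˣ), Algebra.self_mem_adjoin_singleton K _⟩
  obtain ⟨e, he, n, hn, hpow_dvd, hdvd_pow⟩ := exists_isIdempotentElem_dvd_pow (1 + t)
  refine ⟨e, e.2, ?_, ?_⟩
  · obtain ⟨y, hy⟩ := hpow_dvd
    obtain ⟨z, hz⟩ := hdvd_pow
    have hfix : e * (1 + t) ^ n = (1 + t) ^ n := by rw [hz, ← mul_assoc, he.eq]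
    exact mul_eq_mul_star_of_commute_cosquare (congrArg Subtype.val (mul_comm e t))
      (congrArg Subtype.val (hy.trans (mul_comm _ y))) (congrArg Subtype.val hfix)
  · have hunit := isUnit_mul_add_one_sub_mul_add he hn hpow_dvd hdvd_pow
      (hcd.map (algebraMap K A)) (algebraMap K A d)
    have hsplit : (e + c • (1 - e)) + t * (e + d • (1 - e)) =
        e * (1 + t) + (1 - e) * (algebraMap K A (c - d) + (1 + t) * algebraMap K A d) := by
      simp only [Algebra.smul_def, map_sub]
      ring
    rw [← hsplit] at hunit
    exact hunit.map A.val

theorem exists_isSelfAdjoint_mul_mul_star_eq [StarRing K] [StarModule K R] {c : K}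
    (hc : IsUnit (c - star c)) {x P : Rˣ} (h : x * P * star x = P) :
    ∃ b : R, IsUnit b ∧ IsSelfAdjoint b ∧ x * b * star (x : R) = b := by
  set t := cosquare P
  obtain ⟨e, he_mem, he_star, hunit⟩ :=
    exists_mul_eq_mul_star_and_isUnit_add_cosquare_mul P hc
  set u := (e + c • (1 - e)) + t * (e + star c • (1 - e)) with hu
  set a := e + c • (1 - e) with ha
  have hu_mem : u ∈ Algebra.adjoin K {(t : R)} := by
    have ht_mem := Algebra.self_mem_adjoin_singleton K (t : R)
    have h_mem (d : K) : e + d • (1 - e) ∈ Algebra.adjoin K {(t : R)} :=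
      add_mem he_mem (Subalgebra.smul_mem _ (sub_mem (one_mem _) he_mem) d)
    exact add_mem (h_mem c) (mul_mem ht_mem (h_mem _))
  have hxu : Commute (x : R) u :=
    Algebra.commute_of_mem_adjoin_singleton_of_commute hu_mem (commute_cosquare h).units_val
  have hstar : star (a * P) = t * (e + star c • (1 - e)) * P := by
    have ha_star : P * star a = (e + star c • (1 - e)) * P := by
      simp only [ha, star_add, star_smul, star_sub, star_one, mul_add, mul_smul_comm, mul_sub,
        mul_one, add_mul, smul_mul_assoc, sub_mul, one_mul, he_star]
    rw [star_mul, star_coe_eq_cosquare_mul, mul_assoc, ha_star, mul_assoc]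
  have hxP : (x : R) * P * star (x : R) = P := congrArg Units.val h
  refine ⟨u * P, hunit.mul P.isUnit, ?_, ?_⟩
  · rw [hu, add_mul, ← hstar]
    exact IsSelfAdjoint.add_star_self (a * P)
  · rw [← mul_assoc, hxu.eq, mul_assoc u, mul_assoc u, hxP]

end StarAlgebra

section Matrix

variable {n K : Type*} [Fintype n] [DecidableEq n] [CommRing K]

theorem inv_eq_inv_mul_mul_iff {X P Y : Matrix n n K} (hP : IsUnit P) (hY : IsUnit Y) :
    Y⁻¹ = P⁻¹ * X * P ↔ X * P * Y = P := by
  lift P to (Matrix n n K)ˣ using hP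
  lift Y to (Matrix n n K)ˣ using hY
  rw [← coe_units_inv, ← coe_units_inv, mul_assoc, Units.eq_inv_mul_iff_mul_eq,
    Units.mul_inv_eq_iff_eq_mul, eq_comm]

theorem exists_hermitian_form_iff_similar_star_inv_general [IsArtinianRing K] [StarRing K] {c : K}
    (hc : IsUnit (c - star c)) {X : Matrix n n K} (hX : IsUnit X) :
    (∃ B : Matrix n n K, IsUnit B ∧ Bᴴ = B ∧ X * B * Xᴴ = B) ↔
      ∃ P : Matrix n n K, IsUnit P ∧ Xᴴ⁻¹ = P⁻¹ * X * P := by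
  constructor
  · rintro ⟨B, hB, -, h⟩
    exact ⟨B, hB, (inv_eq_inv_mul_mul_iff hB hX.star).2 h⟩
  · rintro ⟨P, hP, h⟩
    replace h := (inv_eq_inv_mul_mul_iff hP hX.star).1 h
    lift X to (Matrix n n K)ˣ using hX
    lift P to (Matrix n n K)ˣ using hP
    exact exists_isSelfAdjoint_mul_mul_star_eq hc (Units.ext h)

end Matrix

section FiniteField

variable {K : Type*} [Field K] [Fintype K]

theorem exists_pow_ne_self {m : ℕ} (hm : 1 < m) (hcard : m < Fintype.card K) :
    ∃ c : K, c ^ m ≠ c := by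
  have hunits : m - 1 < Nat.card Kˣ := by
    rw [Nat.card_units, Nat.card_eq_fintype_card]
    omega
  obtain ⟨g, hg⟩ := exists_pow_ne_one_of_isCyclic (Nat.sub_ne_zero_of_lt hm) hunits
  refine ⟨g, fun h => hg ?_⟩
  have hgm : g ^ m = g := Units.ext h
  rwa [← Nat.sub_add_cancel hm.le, pow_succ, mul_eq_right] at hgm

theorem add_pow_of_dvd_card {q : ℕ} (hq : q ∣ Fintype.card K) (a b : K) :
    (a + b) ^ q = a ^ q + b ^ q := by
  obtain ⟨p, _, m, hp, hcard⟩ := FiniteField.card' K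
  have : Fact p.Prime := ⟨hp⟩
  obtain ⟨j, -, rfl⟩ := (Nat.dvd_prime_pow hp).1 (hcard ▸ hq)
  exact add_pow_char_pow ..

/-- The involution `a ↦ a ^ q` of the field with `q ^ 2` elements. It makes the conjugate transpose
of matrices agree definitionally with `hermStar q`. -/
abbrev frobeniusStarRing {q : ℕ} (hcard : Fintype.card K = q ^ 2) : StarRing K where
  star a := a ^ q
  star_involutive a := by
    change (a ^ q) ^ q = a
    rw [← pow_mul, ← sq, ← hcard, FiniteField.pow_card]
  star_mul a b := (mul_pow a b q).trans (mul_comm _ _)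
  star_add := add_pow_of_dvd_card (hcard ▸ dvd_pow_self q two_ne_zero)

end FiniteField

/-- Let `K` be the field with `q²` elements, `q` a prime power, and let `X ∈ GL(n,K)`.
There exists an invertible hermitian matrix `B` with `X·B·X* = B` if and only if
`X` is similar to `(X*)⁻¹`. -/
theorem exists_hermitian_form_iff_similar_star_inv
    {p k : ℕ} [Fact p.Prime] (hk : k ≠ 0) (q : ℕ) (hq : q = p ^ k)
    {K : Type*} [Field K] [Fintype K] (hcard : Fintype.card K = q ^ 2)
    {n : ℕ} (X : Matrix (Fin n) (Fin n) K) (hX : IsUnit X) :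
    (∃ B : Matrix (Fin n) (Fin n) K, IsUnit B ∧ hermStar q B = B ∧
        X * B * hermStar q X = B) ↔
      (∃ P : Matrix (Fin n) (Fin n) K, IsUnit P ∧ (hermStar q X)⁻¹ = P⁻¹ * X * P) := by
  have hq_lt : 1 < q := hq ▸ Nat.one_lt_pow hk (Fact.out : p.Prime).one_lt
  have hq_card : q < Fintype.card K := hcard ▸ lt_self_pow₀ hq_lt one_lt_two
  obtain ⟨c, hc⟩ := exists_pow_ne_self hq_lt hq_card
  let _ := frobeniusStarRing hcard
  exact exists_hermitian_form_iff_similar_star_inv_general (sub_ne_zero.2 hc.symm).isUnit hX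
end

section
/- Let F be a finite field and let X ∈ M_n(F) be invertible. Then there exists an invertible alternating matrix B ∈ M_n(F) with X·B·Xᵀ = B if and only if X is similar to X⁻¹ and, for every λ ∈ {1, −1} and every odd m ≥ 1, the multiplicity of (t−λ)^m as an elementary divisor of X is even. -/
open Matrix

/-- The multiplicity of `(t - λ)^m` as an elementary divisor of `X`, computed as
`2·dim ker((X−λI)^m) − dim ker((X−λI)^{m+1}) − dim ker((X−λI)^{m−1})` (as an integer). -/
noncomputable def edMultiplicity {F : Type*} [Field F] {n : ℕ}
    (X : Matrix (Fin n) (Fin n) F) (lam : F) (m : ℕ) : ℤ :=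
  2 * (Module.finrank F (LinearMap.ker (Matrix.toLin' ((X - lam • 1) ^ m))) : ℤ)
    - (Module.finrank F (LinearMap.ker (Matrix.toLin' ((X - lam • 1) ^ (m + 1)))) : ℤ)
    - (Module.finrank F (LinearMap.ker (Matrix.toLin' ((X - lam • 1) ^ (m - 1)))) : ℤ)

/-!
Multiplication by a matrix `A` makes `Fⁿ` an `F[X]`-module, and `A` preserves a nondegenerate
alternating form exactly when `X` acts on this module as an isometry of such a form.

Assume that it does. The orthogonal complement of the image of the reversed polynomial `g.reverse`
is the kernel of `g`, so all nullities are invariant under reversal. If moreover `g` is associated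
to its reversal, then `β (g v) (g w)` is an alternating form with kernel `ker (g ^ 2)`, so
`dim ker (g ^ 2)` has the parity of the whole dimension. With `g` a power of `X - c`, `c = ±1`, this
gives the parity of the multiplicities of odd blocks.

Conversely, decompose the module into summands `F[X] ⧸ (p ^ e)`. A summand for `p` is paired with
a summand for `p.reverse`, on which `X` acts as the inverse. If `p` is associated to its reversal,
inverting `X` induces an involution `θ` of `F[X] ⧸ (p ^ e)`, and `(a, b) ↦ φ (a * θ b)` is a
suitable form if the functional `φ` kills the ring `F[X + X⁻¹]`, which contains all norms
`a * θ a`, but not the minimal ideal `(p ^ (e - 1))`. Such `φ` exists unless the ring contains this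
ideal, which forces `p` to be `X ∓ 1` and `e` to be odd; the summands of this kind come in equal
pairs.
-/

section

open Module Polynomial

variable {F : Type*} [Field F]

section SymplecticForm

variable {M N : Type*} [AddCommGroup M] [Module F M] [Module F[X] M]
  [AddCommGroup N] [Module F N] [Module F[X] N]

variable (F M) in
/-- An `F[X]`-module has a symplectic form if multiplication by `X` is an isometry of some
nondegenerate alternating `F`-bilinear form. For alternating forms it suffices to ask for
nondegeneracy in the left variable. -/
def HasSymplecticForm : Prop :=
  ∃ β : LinearMap.BilinForm F M, β.IsAlt ∧ β.SeparatingLeft ∧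
    ∀ v w, β ((X : F[X]) • v) ((X : F[X]) • w) = β v w

namespace HasSymplecticForm

theorem of_subsingleton [Subsingleton M] : HasSymplecticForm F M :=
  ⟨0, LinearMap.BilinForm.isAlt_zero, fun _ _ => Subsingleton.elim _ _, fun _ _ => rfl⟩

theorem congr [IsScalarTower F F[X] M] [IsScalarTower F F[X] N] (e : M ≃ₗ[F[X]] N)
    (h : HasSymplecticForm F M) : HasSymplecticForm F N := by
  obtain ⟨β, halt, hsep, hX⟩ := h
  let f := e.symm.toLinearMap.restrictScalars F
  refine ⟨β.compl₁₂ f f, fun v => halt _, fun v hv => ?_, fun v w => ?_⟩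
  · exact e.symm.map_eq_zero_iff.1 (hsep _ fun w => by simpa [f] using hv (e w))
  · simp [f, hX]

theorem prod (hM : HasSymplecticForm F M) (hN : HasSymplecticForm F N) :
    HasSymplecticForm F (M × N) := by
  obtain ⟨β, halt, hsep, hX⟩ := hM
  obtain ⟨γ, halt', hsep', hX'⟩ := hN
  refine ⟨β.compl₁₂ (.fst F M N) (.fst F M N) + γ.compl₁₂ (.snd F M N) (.snd F M N),
    fun v => ?_, fun v hv => Prod.ext (hsep _ fun w => ?_) (hsep' _ fun w => ?_), fun v w => ?_⟩
  · simp [halt v.1, halt' v.2]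
  · simpa using hv (w, 0)
  · simpa using hv (0, w)
  · simp [hX, hX']

theorem of_pairing (γ : M →ₗ[F] N →ₗ[F] F) (hγ : γ.Nondegenerate)
    (hX : ∀ v w, γ ((X : F[X]) • v) ((X : F[X]) • w) = γ v w) : HasSymplecticForm F (M × N) := by
  let δ := γ.compl₁₂ (.fst F M N) (.snd F M N)
  have hδ (v w) : (δ - δ.flip) v w = γ v.1 w.2 - γ w.1 v.2 := rfl
  refine ⟨δ - δ.flip, fun v => sub_self _,
    fun v hv => Prod.ext (hγ.1 _ fun w => ?_) (hγ.2 _ fun w => ?_), fun v w => ?_⟩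
  · simpa only [hδ, map_zero, LinearMap.zero_apply, sub_zero] using hv (0, w)
  · simpa only [hδ, map_zero, zero_sub, neg_eq_zero] using hv (w, 0)
  · simp only [hδ, Prod.smul_fst, Prod.smul_snd, hX]

end HasSymplecticForm

end SymplecticForm

section Nullity

variable {M N : Type*} [AddCommGroup M] [Module F M] [Module F[X] M] [IsScalarTower F F[X] M]
  [AddCommGroup N] [Module F N] [Module F[X] N] [IsScalarTower F F[X] N]

variable (M) in
/-- The `F`-dimension of the `g`-torsion of an `F[X]`-module. -/
noncomputable def nullity (g : F[X]) : ℕ :=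
  finrank F (LinearMap.ker (Algebra.lsmul F F M g))

theorem nullity_congr (e : M ≃ₗ[F[X]] N) (g : F[X]) : nullity M g = nullity N g := by
  have h : (LinearMap.ker (Algebra.lsmul F F M g)).map (e.restrictScalars F : M →ₗ[F] N) =
      LinearMap.ker (Algebra.lsmul F F N g) := by
    ext w
    rw [Submodule.mem_map_equiv]
    simp [← map_smul]
  rw [nullity, nullity, ← h, LinearEquiv.finrank_map_eq]

theorem nullity_eq_zero_of_isUnit {g : F[X]} (hg : IsUnit g) : nullity M g = 0 := by
  have h : LinearMap.ker (Algebra.lsmul F F M g) = ⊥ :=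
    LinearMap.ker_eq_bot'.2 fun v hv => hg.smul_eq_zero.1 hv
  rw [nullity, h, finrank_bot]

theorem nullity_prod [FiniteDimensional F M] [FiniteDimensional F N] (g : F[X]) :
    nullity (M × N) g = nullity M g + nullity N g := by
  let e : LinearMap.ker (Algebra.lsmul F F (M × N) g) ≃ₗ[F]
      LinearMap.ker (Algebra.lsmul F F M g) × LinearMap.ker (Algebra.lsmul F F N g) :=
    { toFun v := (⟨v.1.1, congrArg Prod.fst v.2⟩, ⟨v.1.2, congrArg Prod.snd v.2⟩)
      map_add' _ _ := rfl
      map_smul' _ _ := rfl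
      invFun v := ⟨(v.1, v.2), Prod.ext v.1.2 v.2.2⟩ }
  rw [nullity, e.finrank_eq, finrank_prod, nullity, nullity]

theorem nullity_pi {ι : Type*} [Fintype ι] {M : ι → Type*} [∀ i, AddCommGroup (M i)]
    [∀ i, Module F (M i)] [∀ i, Module F[X] (M i)] [∀ i, IsScalarTower F F[X] (M i)]
    [∀ i, FiniteDimensional F (M i)] (g : F[X]) :
    nullity (∀ i, M i) g = ∑ i, nullity (M i) g := by
  let e : LinearMap.ker (Algebra.lsmul F F (∀ i, M i) g) ≃ₗ[F]
      ∀ i, LinearMap.ker (Algebra.lsmul F F (M i) g) :=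
    { toFun v i := ⟨v.1 i, congrFun v.2 i⟩
      map_add' _ _ := rfl
      map_smul' _ _ := rfl
      invFun v := ⟨fun i => v i, funext fun i => (v i).2⟩ }
  rw [nullity, e.finrank_eq, finrank_pi_fintype]
  rfl

variable (M) in
/-- The second difference of the nullities of the powers of `g` at `m`. If `g` is irreducible and
`0 < m`, this is `deg g` times the number of summands `F[X] ⧸ (g ^ m)` of `M`. -/
noncomputable def elemDivWeight (g : F[X]) (m : ℕ) : ℤ :=
  2 * nullity M (g ^ m) - nullity M (g ^ (m + 1)) - nullity M (g ^ (m - 1))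

theorem elemDivWeight_congr (e : M ≃ₗ[F[X]] N) (g : F[X]) (m : ℕ) :
    elemDivWeight M g m = elemDivWeight N g m := by
  simp only [elemDivWeight, nullity_congr e]

theorem elemDivWeight_eq_zero_of_isUnit {g : F[X]} (hg : IsUnit g) (m : ℕ) :
    elemDivWeight M g m = 0 := by
  simp only [elemDivWeight, nullity_eq_zero_of_isUnit (hg.pow _)]
  rfl

theorem elemDivWeight_prod [FiniteDimensional F M] [FiniteDimensional F N] (g : F[X]) (m : ℕ) :
    elemDivWeight (M × N) g m = elemDivWeight M g m + elemDivWeight N g m := by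
  simp only [elemDivWeight, nullity_prod]
  push_cast
  ring

theorem elemDivWeight_pi {ι : Type*} [Fintype ι] {M : ι → Type*} [∀ i, AddCommGroup (M i)]
    [∀ i, Module F (M i)] [∀ i, Module F[X] (M i)] [∀ i, IsScalarTower F F[X] (M i)]
    [∀ i, FiniteDimensional F (M i)] (g : F[X]) (m : ℕ) :
    elemDivWeight (∀ i, M i) g m = ∑ i, elemDivWeight (M i) g m := by
  simp only [elemDivWeight, nullity_pi, Finset.sum_sub_distrib, ← Finset.mul_sum]
  push_cast
  rfl

variable (F M) in
/-- The numerical invariants of an `F[X]`-module that detect symplectic forms. The first condition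
says that the modules on which `X` acts as multiplication by `X` and by `X⁻¹` are isomorphic. -/
structure HasSymplecticInvariants : Prop where
  nullity_reverse : ∀ g : F[X], nullity M g.reverse = nullity M g
  even_elemDivWeight : ∀ c : F, c = 1 ∨ c = -1 → ∀ m : ℕ, Odd m →
    Even (elemDivWeight M (X - C c) m)

namespace HasSymplecticInvariants

theorem congr (e : M ≃ₗ[F[X]] N) (h : HasSymplecticInvariants F M) :
    HasSymplecticInvariants F N where
  nullity_reverse g := by
    rw [← nullity_congr e, ← nullity_congr e, h.nullity_reverse]
  even_elemDivWeight c hc m hm := by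
    rw [← elemDivWeight_congr e]
    exact h.even_elemDivWeight c hc m hm

theorem of_prod_left [FiniteDimensional F M] [FiniteDimensional F N]
    (hMN : HasSymplecticInvariants F (M × N)) (hM : HasSymplecticInvariants F M) :
    HasSymplecticInvariants F N where
  nullity_reverse g := by
    have := hMN.nullity_reverse g
    rwa [nullity_prod, nullity_prod, hM.nullity_reverse, Nat.add_left_cancel_iff] at this
  even_elemDivWeight c hc m hm := by
    have := hMN.even_elemDivWeight c hc m hm
    rw [elemDivWeight_prod] at this
    exact (Int.even_add.1 this).1 (hM.even_elemDivWeight c hc m hm)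

end HasSymplecticInvariants

end Nullity

section Reverse

variable {R : Type*} [CommRing R] [IsDomain R]

theorem reverse_pow_of_domain (p : R[X]) (n : ℕ) : (p ^ n).reverse = p.reverse ^ n := by
  induction n with
  | zero => simpa using reverse_C (1 : R)
  | succ n ih => rw [pow_succ, reverse_mul_of_domain, ih, pow_succ]

theorem associated_reverse {p q : R[X]} (h : Associated p q) :
    Associated p.reverse q.reverse := by
  obtain ⟨u, rfl⟩ := h
  obtain ⟨c, hc, hcu⟩ := Polynomial.isUnit_iff.1 u.isUnit
  rw [reverse_mul_of_domain, ← hcu, reverse_C]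
  exact associated_mul_unit_right _ _ (hc.map C)

theorem reverse_X_sub_C (c : R) : (X - C c).reverse = 1 - C c * X := by
  rw [reverse, natDegree_X_sub_C, reflect_sub, reflect_C, pow_one, reflect_one_X]

theorem associated_reverse_X_sub_C {c : R} (hc : c = 1 ∨ c = -1) :
    Associated (X - C c).reverse (X - C c) := by
  rw [reverse_X_sub_C]
  rcases hc with rfl | rfl
  · exact ⟨-1, by simp⟩
  · exact ⟨1, by simp [add_comm]⟩

theorem natDegree_reverse_of_coeff_zero_ne_zero {R : Type*} [Semiring R] {p : R[X]}
    (hp : p.coeff 0 ≠ 0) : p.reverse.natDegree = p.natDegree := by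
  rw [reverse_natDegree, natTrailingDegree_eq_zero.2 (.inr hp), Nat.sub_zero]

theorem reverse_reverse_of_coeff_zero_ne_zero {R : Type*} [Semiring R] {p : R[X]}
    (hp : p.coeff 0 ≠ 0) : p.reverse.reverse = p := by
  ext n
  rw [coeff_reverse, coeff_reverse, natDegree_reverse_of_coeff_zero_ne_zero hp, revAt_invol]

theorem isUnit_of_isUnit_reverse {p : R[X]} (hp : p.coeff 0 ≠ 0) (h : IsUnit p.reverse) :
    IsUnit p := by
  have hdeg := natDegree_eq_zero_of_isUnit h
  rw [natDegree_reverse_of_coeff_zero_ne_zero hp] at hdeg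
  rw [eq_C_of_natDegree_eq_zero hdeg] at h ⊢
  rwa [reverse_C] at h

theorem irreducible_reverse {p : R[X]} (hp : Irreducible p) (hp0 : p.coeff 0 ≠ 0) :
    Irreducible p.reverse := by
  refine ⟨fun h => hp.not_isUnit (isUnit_of_isUnit_reverse hp0 h), fun a b hab => ?_⟩
  have hab0 : a.coeff 0 * b.coeff 0 ≠ 0 := by
    rw [← mul_coeff_zero, ← hab, coeff_zero_reverse]
    exact leadingCoeff_ne_zero.2 hp.ne_zero
  have hp' : p = a.reverse * b.reverse := by
    rw [← reverse_mul_of_domain, ← hab, reverse_reverse_of_coeff_zero_ne_zero hp0]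
  exact (hp.isUnit_or_isUnit hp').imp (isUnit_of_isUnit_reverse (left_ne_zero_of_mul hab0))
    (isUnit_of_isUnit_reverse (right_ne_zero_of_mul hab0))

end Reverse

section AlternatingForm

theorem sup_span_singleton_le_orthogonal {R V : Type*} [CommRing R] [AddCommGroup V] [Module R V]
    {β : LinearMap.BilinForm R V} (hβ : β.IsAlt) {W : Submodule R V} (hW : W ≤ β.orthogonal W)
    {x : V} (hx : x ∈ β.orthogonal W) : W ⊔ R ∙ x ≤ β.orthogonal (W ⊔ R ∙ x) := by
  intro v hv w hw
  obtain ⟨a, ha, y, hy, rfl⟩ := Submodule.mem_sup.1 hv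
  obtain ⟨b, hb, z, hz, rfl⟩ := Submodule.mem_sup.1 hw
  obtain ⟨c, rfl⟩ := Submodule.mem_span_singleton.1 hy
  obtain ⟨d, rfl⟩ := Submodule.mem_span_singleton.1 hz
  have hba : β b a = 0 := hW ha b hb
  have hbx : β b x = 0 := hx b hb
  have hxa : β x a = 0 := hβ.eq_iff.1 (hx a ha)
  simp [hba, hbx, hxa, hβ x]

/-- A maximal totally isotropic subspace `W` is its own orthogonal complement, so
`2 * dim W = dim V + dim (ker β)`. -/
theorem even_finrank_add_finrank_ker {V : Type*} [AddCommGroup V] [Module F V]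
    [FiniteDimensional F V] {β : LinearMap.BilinForm F V} (hβ : β.IsAlt) :
    Even (finrank F V + finrank F (LinearMap.ker β)) := by
  obtain ⟨W, hW⟩ := exists_maximal_of_wellFoundedGT
    (fun W : Submodule F V => W ≤ β.orthogonal W) ⟨⊥, bot_le⟩
  have hWW : β.orthogonal W = W := by
    refine le_antisymm (fun x hx => ?_) hW.prop
    exact hW.le_of_ge (sup_span_singleton_le_orthogonal hβ hW.prop hx) le_sup_left
      (Submodule.mem_sup_right (Submodule.mem_span_singleton_self x))
  have h := LinearMap.BilinForm.finrank_add_finrank_orthogonal hβ.isRefl W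
  have htop : β.orthogonal ⊤ ≤ W := hWW ▸ LinearMap.BilinForm.orthogonal_le le_top
  rw [hWW, inf_eq_right.2 htop, LinearMap.BilinForm.orthogonal_top_eq_ker hβ.isRefl] at h
  exact ⟨_, h.symm⟩

end AlternatingForm

section Isometry

variable {R M : Type*} [CommRing R] [AddCommGroup M] [Module R M] [Module R[X] M]
  {β : LinearMap.BilinForm R M}

theorem apply_X_pow_smul_X_pow_smul
    (hX : ∀ v w, β ((X : R[X]) • v) ((X : R[X]) • w) = β v w) (k : ℕ) (v w : M) :
    β ((X : R[X]) ^ k • v) ((X : R[X]) ^ k • w) = β v w := by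
  induction k with
  | zero => simp
  | succ k ih => rw [pow_succ', mul_smul, mul_smul, hX, ih]

variable [IsScalarTower R R[X] M]

theorem apply_smul_X_pow_natDegree_smul
    (hX : ∀ v w, β ((X : R[X]) • v) ((X : R[X]) • w) = β v w) (g : R[X]) (v w : M) :
    β (g • v) ((X : R[X]) ^ g.natDegree • w) = β v (g.reverse • w) := by
  have hC (a : R) (h : R[X]) (u : M) : (C a * h) • u = a • h • u := by
    rw [mul_smul, ← algebraMap_eq, algebraMap_smul]
  suffices ∀ n, ∀ g : R[X], g.natDegree ≤ n →
      β (g • v) ((X : R[X]) ^ n • w) = β v (reflect n g • w) from this _ g le_rfl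
  intro n
  refine induction_with_natDegree_le _ n (by simp) (fun k a _ hk => ?_) fun f g _ _ hf hg => ?_
  · rw [reflect_C_mul_X_pow, revAt_le hk, hC, hC, map_smul β, LinearMap.smul_apply, map_smul (β v)]
    nth_rw 1 [← Nat.add_sub_of_le hk]
    rw [pow_add, mul_smul (X ^ k) _ w, apply_X_pow_smul_X_pow_smul hX]
  · rw [reflect_add, add_smul, add_smul, map_add, map_add, LinearMap.add_apply, hf, hg]

end Isometry

section NondegenerateIsometry

variable {M : Type*} [AddCommGroup M] [Module F M] [Module F[X] M] [IsScalarTower F F[X] M]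
  [FiniteDimensional F M] {β : LinearMap.BilinForm F M}

theorem X_smul_surjective (hsep : β.SeparatingLeft)
    (hX : ∀ v w, β ((X : F[X]) • v) ((X : F[X]) • w) = β v w) :
    Function.Surjective fun v : M => (X : F[X]) • v := by
  have hinj : Function.Injective (Algebra.lsmul F F M (X : F[X])) := by
    refine (injective_iff_map_eq_zero _).2 fun v hv => hsep v fun w => ?_
    rw [← hX, show (X : F[X]) • v = 0 from hv, map_zero, LinearMap.zero_apply]
  exact LinearMap.injective_iff_surjective.1 hinj

theorem forall_apply_reverse_smul_eq_zero_iff (hsep : β.SeparatingLeft)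
    (hX : ∀ v w, β ((X : F[X]) • v) ((X : F[X]) • w) = β v w) (g : F[X]) (v : M) :
    (∀ w, β v (g.reverse • w) = 0) ↔ g • v = 0 := by
  simp only [← apply_smul_X_pow_natDegree_smul hX]
  refine ⟨fun h => hsep _ fun w => ?_, fun h w => by rw [h, map_zero, LinearMap.zero_apply]⟩
  obtain ⟨w, rfl⟩ : ∃ u, (X : F[X]) ^ g.natDegree • u = w := by
    simpa only [← smul_iterate_apply] using (X_smul_surjective hsep hX).iterate g.natDegree w
  exact h w

theorem nullity_reverse (halt : β.IsAlt) (hsep : β.SeparatingLeft)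
    (hX : ∀ v w, β ((X : F[X]) • v) ((X : F[X]) • w) = β v w) (g : F[X]) :
    nullity M g.reverse = nullity M g := by
  have horth : β.orthogonal (LinearMap.range (Algebra.lsmul F F M g.reverse)) =
      LinearMap.ker (Algebra.lsmul F F M g) := by
    ext v
    simpa [LinearMap.BilinForm.mem_orthogonal_iff, halt.eq_iff] using
      forall_apply_reverse_smul_eq_zero_iff hsep hX g v
  have hdim := LinearMap.BilinForm.finrank_orthogonal
    (halt.isRefl.nondegenerate_iff_separatingLeft.2 hsep)
    (LinearMap.range (Algebra.lsmul F F M g.reverse))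
  have hrank := (Algebra.lsmul F F M g.reverse).finrank_range_add_finrank_ker
  rw [horth] at hdim
  simp only [nullity]
  omega

theorem even_finrank_add_nullity_sq (halt : β.IsAlt) (hsep : β.SeparatingLeft)
    (hX : ∀ v w, β ((X : F[X]) • v) ((X : F[X]) • w) = β v w) {g : F[X]}
    (hg : Associated g.reverse g) : Even (finrank F M + nullity M (g ^ 2)) := by
  obtain ⟨⟨a, ha⟩, b, hb⟩ := hg.dvd_dvd
  let f := Algebra.lsmul F F M g
  have hker : LinearMap.ker (β.compl₁₂ f f) = LinearMap.ker (Algebra.lsmul F F M (g ^ 2)) := by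
    ext v
    have hgv : (∀ w, β (g • v) (g • w) = 0) ↔ ∀ w, β (g • v) (g.reverse • w) = 0 := by
      refine ⟨fun h w => ?_, fun h w => ?_⟩
      · rw [hb, mul_smul]
        exact h (b • w)
      · rw [show g • w = g.reverse • a • w by rw [← mul_smul, ← ha]]
        exact h (a • w)
    rw [forall_apply_reverse_smul_eq_zero_iff hsep hX, ← mul_smul, ← sq] at hgv
    rw [LinearMap.mem_ker, LinearMap.mem_ker, Algebra.lsmul_coe, ← hgv]
    exact LinearMap.ext_iff
  rw [nullity, ← hker]
  exact even_finrank_add_finrank_ker fun v => halt _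

end NondegenerateIsometry

theorem HasSymplecticForm.hasSymplecticInvariants {M : Type*} [AddCommGroup M] [Module F M]
    [Module F[X] M] [IsScalarTower F F[X] M] [FiniteDimensional F M] (h : HasSymplecticForm F M) :
    HasSymplecticInvariants F M := by
  obtain ⟨β, halt, hsep, hX⟩ := h
  refine ⟨nullity_reverse halt hsep hX, fun c hc m hm => ?_⟩
  obtain ⟨k, rfl⟩ := hm
  have heven (j : ℕ) : Even (finrank F M + nullity M ((X - C c) ^ (2 * j))) := by
    rw [mul_comm, pow_mul]
    refine even_finrank_add_nullity_sq halt hsep hX ?_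
    rw [reverse_pow_of_domain]
    exact (associated_reverse_X_sub_C hc).pow_pow
  have h₀ := heven k
  have h₁ := heven (k + 1)
  rw [elemDivWeight, Nat.add_sub_cancel]
  grind

section CyclicModule

theorem finiteDimensional_quotient_span {q : F[X]} (hq : q ≠ 0) :
    FiniteDimensional F (F[X] ⧸ Ideal.span {q}) :=
  (AdjoinRoot.powerBasis hq).finite

theorem nullity_quotient_span {q g d : F[X]} (hq : q ≠ 0)
    (hd : Ideal.span {q} ⊔ Ideal.span {g} = Ideal.span {d}) :
    nullity (F[X] ⧸ Ideal.span {q}) g = d.natDegree := by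
  have := finiteDimensional_quotient_span hq
  let f := Algebra.lsmul F F (F[X] ⧸ Ideal.span {q}) g
  let J := (Ideal.span {g}).map (Ideal.Quotient.mkₐ F (Ideal.span {q}))
  have hrange : LinearMap.range f = J.restrictScalars F := by
    have hJ : J = Ideal.span {Ideal.Quotient.mk _ g} := by
      simp only [J, Ideal.map_span, Set.image_singleton, Ideal.Quotient.mkₐ_eq_mk]
    ext a
    rw [hJ, Submodule.restrictScalars_mem, Ideal.mem_span_singleton']
    simp only [mul_comm _ (Ideal.Quotient.mk _ g)]
    rfl
  have hcoker : finrank F ((F[X] ⧸ Ideal.span {q}) ⧸ LinearMap.range f) = d.natDegree := by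
    rw [hrange, (Submodule.Quotient.restrictScalarsEquiv F J).finrank_eq,
      (DoubleQuot.quotQuotEquivQuotSupₐ F _ _).toLinearEquiv.finrank_eq, hd,
      finrank_quotient_span_eq_natDegree]
  have h₁ := (LinearMap.range f).finrank_quotient_add_finrank
  have h₂ := f.finrank_range_add_finrank_ker
  change finrank F (LinearMap.ker f) = _
  omega

theorem nullity_quotient_span_pow {p g : F[X]} (hp : Irreducible p) (hgp : Associated g p)
    (e m : ℕ) : nullity (F[X] ⧸ Ideal.span {p ^ e}) (g ^ m) = min e m * g.natDegree := by
  have hspan : Ideal.span {p ^ e} ⊔ Ideal.span {g ^ m} = Ideal.span {p ^ min e m} := by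
    rw [Ideal.span_singleton_eq_span_singleton.2 (hgp.pow_pow (n := m))]
    rcases le_total e m with h | h
    · rw [min_eq_left h, sup_eq_left, Ideal.span_singleton_le_span_singleton]
      exact pow_dvd_pow p h
    · rw [min_eq_right h, sup_eq_right, Ideal.span_singleton_le_span_singleton]
      exact pow_dvd_pow p h
  rw [nullity_quotient_span (pow_ne_zero _ hp.ne_zero) hspan, natDegree_pow,
    natDegree_eq_of_degree_eq (degree_eq_degree_of_associated hgp)]

theorem nullity_quotient_span_pow_of_not_associated {p g : F[X]} (hp : Irreducible p)
    (hg : Irreducible g) (hgp : ¬ Associated g p) (e m : ℕ) :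
    nullity (F[X] ⧸ Ideal.span {p ^ e}) (g ^ m) = 0 := by
  have hcop : IsCoprime (p ^ e) (g ^ m) :=
    (hp.coprime_iff_not_dvd.2 fun h => hgp (hp.associated_of_dvd hg h).symm).pow
  rw [nullity_quotient_span (d := 1) (pow_ne_zero _ hp.ne_zero), natDegree_one]
  rw [(Ideal.sup_eq_top_iff_isCoprime _ _).2 hcop, Ideal.span_singleton_one]

open scoped Classical in
theorem elemDivWeight_quotient_span_pow {p g : F[X]} (hp : Irreducible p) (hg : Irreducible g)
    (e : ℕ) {m : ℕ} (hm : 0 < m) :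
    elemDivWeight (F[X] ⧸ Ideal.span {p ^ e}) g m =
      if Associated g p ∧ e = m then (g.natDegree : ℤ) else 0 := by
  rw [elemDivWeight]
  by_cases hgp : Associated g p
  · simp only [nullity_quotient_span_pow hp hgp, hgp, true_and]
    obtain h | rfl | h := lt_trichotomy e m
    · rw [if_neg h.ne, min_eq_left h.le, min_eq_left (by omega), min_eq_left (by omega)]
      ring
    · rw [if_pos rfl, min_self, min_eq_left (by omega), min_eq_right (by omega)]
      push_cast [Nat.cast_sub hm]
      ring
    · rw [if_neg h.ne', min_eq_right h.le, min_eq_right (by omega), min_eq_right (by omega)]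
      push_cast [Nat.cast_sub hm]
      ring
  · simp [nullity_quotient_span_pow_of_not_associated hp hg hgp, hgp]

end CyclicModule

section Functional

variable {p : F[X]} {k : ℕ}

theorem exists_mul_eq_mk_pow (hp : Irreducible p) {a : F[X] ⧸ Ideal.span {p ^ (k + 1)}}
    (ha : a ≠ 0) : ∃ b, a * b = Ideal.Quotient.mk _ (p ^ k) := by
  obtain ⟨g, rfl⟩ := Ideal.Quotient.mk_surjective a
  rw [Ne, Ideal.Quotient.eq_zero_iff_mem, Ideal.mem_span_singleton] at ha
  have hg0 : g ≠ 0 := by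
    rintro rfl
    exact ha (dvd_zero _)
  obtain ⟨j, g', hg', rfl⟩ : ∃ j g', ¬ p ∣ g' ∧ g = p ^ j * g' := by
    obtain ⟨g', h, h'⟩ :=
      (FiniteMultiplicity.of_prime_left hp.prime hg0).exists_eq_pow_mul_and_not_dvd
    exact ⟨_, g', h', h⟩
  have hj : j ≤ k := by
    by_contra! h
    exact ha ((pow_dvd_pow p h).mul_right _)
  obtain ⟨a, b, hab⟩ : IsCoprime g' (p ^ (k + 1)) :=
    ((hp.coprime_iff_not_dvd.2 hg').pow_left).symm
  refine ⟨Ideal.Quotient.mk _ (a * p ^ (k - j)), ?_⟩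
  rw [← map_mul, Ideal.Quotient.mk_eq_mk_iff_sub_mem, Ideal.mem_span_singleton]
  have hpk : p ^ k = p ^ j * p ^ (k - j) := by rw [← pow_add, Nat.add_sub_of_le hj]
  exact ⟨-(b * p ^ k), by linear_combination p ^ k * hab - g' * a * hpk⟩

/-- Every nonzero ideal of `F[X] ⧸ (p ^ (k + 1))` contains `p ^ k`, so a functional which does not
kill the ideal generated by `p ^ k` has no nonzero ideal in its kernel. -/
theorem exists_le_ker_forall_apply_mul (hp : Irreducible p)
    (W : Submodule F (F[X] ⧸ Ideal.span {p ^ (k + 1)})) {c : F[X] ⧸ Ideal.span {p ^ (k + 1)}}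
    (hc : Ideal.Quotient.mk _ (p ^ k) * c ∉ W) :
    ∃ φ : (F[X] ⧸ Ideal.span {p ^ (k + 1)}) →ₗ[F] F, W ≤ LinearMap.ker φ ∧
      ∀ a, (∀ b, φ (a * b) = 0) → a = 0 := by
  obtain ⟨φ, hφc, hφW⟩ := Submodule.exists_le_ker_of_notMem hc
  refine ⟨φ, hφW, fun a ha => ?_⟩
  by_contra ha0
  obtain ⟨b, hb⟩ := exists_mul_eq_mk_pow hp ha0
  exact hφc (by rw [← hb, mul_assoc]; exact ha _)

theorem mk_pow_eq_zero_iff (hp : Irreducible p) {e n : ℕ} :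
    (Ideal.Quotient.mk (Ideal.span {p ^ e}) (p ^ n)) = 0 ↔ e ≤ n := by
  rw [Ideal.Quotient.eq_zero_iff_dvd, pow_dvd_pow_iff hp.ne_zero hp.not_isUnit]

theorem subsingleton_quotient_span_pow_zero : Subsingleton (F[X] ⧸ Ideal.span {p ^ 0}) := by
  rw [pow_zero, Ideal.span_singleton_one]
  infer_instance

theorem exists_forall_apply_mul (hp : Irreducible p) (e : ℕ) :
    ∃ φ : (F[X] ⧸ Ideal.span {p ^ e}) →ₗ[F] F, ∀ a, (∀ b, φ (a * b) = 0) → a = 0 := by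
  cases e with
  | zero =>
    have := subsingleton_quotient_span_pow_zero (p := p)
    exact ⟨0, fun a _ => Subsingleton.elim _ _⟩
  | succ k =>
    have hk : Ideal.Quotient.mk (Ideal.span {p ^ (k + 1)}) (p ^ k) * 1 ∉
        (⊥ : Submodule F (F[X] ⧸ Ideal.span {p ^ (k + 1)})) := by
      rw [mul_one, Submodule.mem_bot, mk_pow_eq_zero_iff hp]
      omega
    obtain ⟨φ, -, hφ⟩ := exists_le_ker_forall_apply_mul hp _ hk
    exact ⟨φ, hφ⟩

end Functional

section Inversion

variable {q q' : F[X]}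

theorem aeval_mk_X {R : Type*} [CommRing R] (q g : R[X]) :
    aeval (Ideal.Quotient.mk (Ideal.span {q}) X) g = Ideal.Quotient.mk (Ideal.span {q}) g := by
  have := aeval_algHom_apply (Ideal.Quotient.mkₐ R (Ideal.span {q})) X g
  rwa [aeval_X_left_apply] at this

theorem exists_algHom_mk_X_mul_mk_X_eq_one (hq : q.coeff 0 ≠ 0) (h : q.reverse ∣ q') :
    ∃ θ : (F[X] ⧸ Ideal.span {q'}) →ₐ[F] (F[X] ⧸ Ideal.span {q}),
      θ (Ideal.Quotient.mk _ X) * Ideal.Quotient.mk _ X = 1 := by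
  set x := Ideal.Quotient.mk (Ideal.span {q}) X
  obtain ⟨a, b, hab⟩ : IsCoprime q X :=
    (irreducible_X.coprime_iff_not_dvd.2 (by rwa [X_dvd_iff])).symm
  have hx : Ideal.Quotient.mk (Ideal.span {q}) b * x = 1 := by
    rw [← map_mul, ← map_one (Ideal.Quotient.mk _), Ideal.Quotient.mk_eq_mk_iff_sub_mem,
      Ideal.mem_span_singleton]
    exact ⟨-a, by linear_combination hab⟩
  let y := Ideal.Quotient.mk (Ideal.span {q}) b
  have hy : aeval y q' = 0 := by
    let := invertibleOfLeftInverse x y hx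
    have hrev := eval₂_reverse_mul_pow (algebraMap F _) x q
    rw [← aeval_def x q, aeval_mk_X, Ideal.Quotient.mk_singleton_self] at hrev
    have hyq : aeval y q.reverse = 0 := ((isUnit_of_invertible x).pow _).mul_left_eq_zero.1 hrev
    obtain ⟨r, rfl⟩ := h
    rw [map_mul, hyq, zero_mul]
  refine ⟨Ideal.Quotient.liftₐ _ (aeval y) fun g hg => ?_, ?_⟩
  · obtain ⟨r, rfl⟩ := Ideal.mem_span_singleton.1 hg
    rw [map_mul, hy, zero_mul]
  · change aeval y X * x = 1
    rwa [aeval_X]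

theorem exists_algEquiv_mk_X_mul_mk_X_eq_one (hq : q.coeff 0 ≠ 0) (h : Associated q' q.reverse) :
    ∃ θ : (F[X] ⧸ Ideal.span {q'}) ≃ₐ[F] (F[X] ⧸ Ideal.span {q}),
      θ (Ideal.Quotient.mk _ X) * Ideal.Quotient.mk _ X = 1 := by
  have hq' : q'.coeff 0 ≠ 0 := by
    rw [Ne, ← X_dvd_iff, h.dvd_iff_dvd_right, X_dvd_iff, coeff_zero_reverse]
    exact leadingCoeff_ne_zero.2 fun h => hq (by rw [h, coeff_zero])
  have h' : Associated q'.reverse q := by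
    simpa only [reverse_reverse_of_coeff_zero_ne_zero hq] using associated_reverse h
  obtain ⟨θ, hθ⟩ := exists_algHom_mk_X_mul_mk_X_eq_one hq h.symm.dvd
  obtain ⟨η, hη⟩ := exists_algHom_mk_X_mul_mk_X_eq_one hq' h'.dvd
  refine ⟨AlgEquiv.ofAlgHom θ η (Ideal.Quotient.algHom_ext _ (algHom_ext ?_))
    (Ideal.Quotient.algHom_ext _ (algHom_ext ?_)), hθ⟩
  · have := congrArg θ hη
    rw [map_mul, map_one] at this
    exact left_inv_eq_right_inv this (by rwa [mul_comm] at hθ ⊢)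
  · have := congrArg η hθ
    rw [map_mul, map_one] at this
    exact left_inv_eq_right_inv this (by rwa [mul_comm] at hη ⊢)

end Inversion

section TwistedPairing

variable {R A B : Type*} [CommRing R] [CommRing A] [CommRing B] [Algebra R A] [Algebra R B]

/-- The `R`-bilinear pairing `(a, b) ↦ φ (a * θ b)` of two `R`-algebras. -/
def twistedPairing (φ : A →ₗ[R] R) (θ : B ≃ₐ[R] A) : A →ₗ[R] B →ₗ[R] R :=
  ((LinearMap.mul R A).compr₂ φ).compl₂ θ.toLinearMap

theorem twistedPairing_apply (φ : A →ₗ[R] R) (θ : B ≃ₐ[R] A) (a : A) (b : B) :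
    twistedPairing φ θ a b = φ (a * θ b) :=
  rfl

theorem nondegenerate_twistedPairing {φ : A →ₗ[R] R} (hφ : ∀ a, (∀ b, φ (a * b) = 0) → a = 0)
    (θ : B ≃ₐ[R] A) : (twistedPairing φ θ).Nondegenerate := by
  refine ⟨fun a ha => hφ a fun b => ?_, fun b hb => ?_⟩
  · simpa [twistedPairing_apply] using ha (θ.symm b)
  · have := hφ (θ b) fun a => by simpa [twistedPairing_apply, mul_comm] using hb a
    simpa using this

theorem twistedPairing_mul_mul (φ : A →ₗ[R] R) (θ : B ≃ₐ[R] A) {x : A} {y : B}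
    (h : θ y * x = 1) (a : A) (b : B) :
    twistedPairing φ θ (x * a) (y * b) = twistedPairing φ θ a b := by
  simp only [twistedPairing_apply, map_mul]
  congr 1
  linear_combination (a * θ b) * h

end TwistedPairing

theorem coeff_zero_pow_ne_zero_s3 {R : Type*} [CommRing R] [IsDomain R] {p : R[X]}
    (hp0 : p.coeff 0 ≠ 0) (e : ℕ) : (p ^ e).coeff 0 ≠ 0 := by
  rw [coeff_zero_eq_eval_zero] at hp0 ⊢
  rw [eval_pow]
  exact pow_ne_zero e hp0

theorem hasSymplecticForm_prod_quotient_span_pow {p p' : F[X]} (hp : Irreducible p)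
    (hp0 : p.coeff 0 ≠ 0) (h : Associated p' p.reverse) (e : ℕ) :
    HasSymplecticForm F ((F[X] ⧸ Ideal.span {p ^ e}) × (F[X] ⧸ Ideal.span {p' ^ e})) := by
  obtain ⟨θ, hθ⟩ := exists_algEquiv_mk_X_mul_mk_X_eq_one (coeff_zero_pow_ne_zero_s3 hp0 e)
    (q' := p' ^ e) (by rw [reverse_pow_of_domain]; exact h.pow_pow)
  obtain ⟨φ, hφ⟩ := exists_forall_apply_mul hp e
  exact .of_pairing (twistedPairing φ θ) (nondegenerate_twistedPairing hφ θ)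
    (twistedPairing_mul_mul φ θ hθ)

section Nilpotent

variable {A : Type*} [CommRing A] {y : A}

theorem le_of_associated_pow_of_isNilpotent (hy : IsNilpotent y) {k l : ℕ}
    (h : Associated (y ^ k) (y ^ l)) (hk : y ^ k ≠ 0) : l ≤ k := by
  by_contra! hlt
  obtain ⟨u, hu⟩ := h.symm
  have hnil : IsNilpotent (y ^ (l - k) * u) :=
    (Commute.all _ _).isNilpotent_mul_right (hy.pow_of_pos (by omega))
  refine hk (hnil.isUnit_one_sub.mul_left_eq_zero.1 ?_)
  rw [mul_sub, mul_one, ← mul_assoc, ← pow_add, Nat.add_sub_of_le hlt.le, hu, sub_self]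

theorem eq_of_associated_pow_of_isNilpotent (hy : IsNilpotent y) {k l : ℕ}
    (h : Associated (y ^ k) (y ^ l)) (hk : y ^ k ≠ 0) : k = l :=
  le_antisymm (le_of_associated_pow_of_isNilpotent hy h.symm (h.ne_zero_iff.1 hk))
    (le_of_associated_pow_of_isNilpotent hy h hk)

theorem exists_associated_pow_of_mem_adjoin [Algebra F A] (hy : IsNilpotent y) {r : A}
    (hr : r ∈ Algebra.adjoin F {y}) : ∃ j, Associated r (y ^ j) := by
  obtain ⟨n, hn⟩ := hy
  rw [Algebra.adjoin_singleton_eq_range_aeval] at hr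
  obtain ⟨g, rfl⟩ := hr
  obtain rfl | hg := eq_or_ne g 0
  · exact ⟨n, by simp [hn]⟩
  obtain ⟨h, hgh, hX⟩ :=
    (FiniteMultiplicity.of_prime_left (prime_X (R := F)) hg).exists_eq_pow_mul_and_not_dvd
  have hunit : IsUnit (aeval y h) := by
    have h0 : IsUnit (algebraMap F A (h.coeff 0)) :=
      (IsUnit.mk0 _ (by rwa [X_dvd_iff] at hX)).map _
    have hnil : IsNilpotent (aeval y h.divX * y) :=
      (Commute.all _ _).isNilpotent_mul_left ⟨n, hn⟩
    rw [← divX_mul_X_add h]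
    simpa using hnil.isUnit_add_right_of_commute h0 (Commute.all _ _)
  refine ⟨multiplicity X g, ?_⟩
  nth_rw 1 [hgh]
  simpa using associated_mul_unit_left _ _ hunit

end Nilpotent

section Involution

variable {R A : Type*} [CommRing R] [CommRing A] [Algebra R A] {θ : A ≃ₐ[R] A} {x : A}

theorem apply_eq_self_of_mem_adjoin_add_apply (hx : θ x * x = 1) {r : A}
    (hr : r ∈ Algebra.adjoin R {x + θ x}) : θ r = r := by
  have hθx : θ (θ x) = x := by
    have := congrArg θ hx
    rw [map_mul, map_one] at this
    exact left_inv_eq_right_inv this hx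
  suffices Algebra.adjoin R {x + θ x} ≤ AlgHom.equalizer (θ : A →ₐ[R] A) (AlgHom.id R A) from
    this hr
  refine Algebra.adjoin_le (Set.singleton_subset_iff.2 ?_)
  change θ (x + θ x) = x + θ x
  rw [map_add, hθx, add_comm]

theorem exists_aeval_eq_add_mul (hx : θ x * x = 1) (g : R[X]) :
    ∃ r ∈ Algebra.adjoin R {x + θ x}, ∃ s ∈ Algebra.adjoin R {x + θ x},
      aeval x g = r + s * x := by
  induction g using Polynomial.induction_on' with
  | add g h hg hh =>
    obtain ⟨r, hr, s, hs, hg⟩ := hg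
    obtain ⟨r', hr', s', hs', hh⟩ := hh
    exact ⟨r + r', add_mem hr hr', s + s', add_mem hs hs', by rw [map_add, hg, hh]; ring⟩
  | monomial n c =>
    induction n with
    | zero => exact ⟨algebraMap R A c, Subalgebra.algebraMap_mem _ c, 0, zero_mem _, by simp⟩
    | succ n ih =>
      obtain ⟨r, hr, s, hs, hrs⟩ := ih
      refine ⟨-s, neg_mem hs, r + s * (x + θ x),
        add_mem hr (mul_mem hs (Algebra.self_mem_adjoin_singleton R _)), ?_⟩
      rw [← monomial_mul_X, map_mul, hrs, aeval_X]
      linear_combination (-s) * hx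

theorem aeval_mul_apply_aeval_mem_adjoin (hx : θ x * x = 1) (g : R[X]) :
    aeval x g * θ (aeval x g) ∈ Algebra.adjoin R {x + θ x} := by
  obtain ⟨r, hr, s, hs, hrs⟩ := exists_aeval_eq_add_mul hx g
  have hnorm : aeval x g * θ (aeval x g) = r * r + s * s + r * s * (x + θ x) := by
    rw [hrs, map_add, map_mul, apply_eq_self_of_mem_adjoin_add_apply hx hr,
      apply_eq_self_of_mem_adjoin_add_apply hx hs]
    linear_combination (s * s) * hx
  rw [hnorm]
  exact add_mem (add_mem (mul_mem hr hr) (mul_mem hs hs))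
    (mul_mem (mul_mem hr hs) (Algebra.self_mem_adjoin_singleton R _))

/-- With `y = x - c` one has `x + θ x - 2 * c = θ x * y ^ 2`, so up to units the fixed ring
contains only even powers of `y`. -/
theorem even_of_mem_adjoin_of_associated_pow {A : Type*} [CommRing A] [Algebra F A]
    {θ : A ≃ₐ[F] A} {x : A} {c : F} (hc : c = 1 ∨ c = -1) (hx : θ x * x = 1)
    (hy : IsNilpotent (x - algebraMap F A c)) {k : ℕ} (hk : (x - algebraMap F A c) ^ k ≠ 0)
    {r : A} (hr : r ∈ Algebra.adjoin F {x + θ x})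
    (h : Associated r ((x - algebraMap F A c) ^ k)) : Even k := by
  set y := x - algebraMap F A c with hy'
  have hcc : algebraMap F A c * algebraMap F A c = 1 := by
    rw [← map_mul, mul_self_eq_one_iff.2 hc, map_one]
  have hw : x + θ x - algebraMap F A (2 * c) = θ x * y ^ 2 := by
    rw [hy', map_mul, map_ofNat]
    linear_combination (2 * algebraMap F A c - x) * hx - θ x * hcc
  have hrw : r ∈ Algebra.adjoin F {θ x * y ^ 2} := by
    refine Algebra.adjoin_le (Set.singleton_subset_iff.2 ?_) hr
    rw [← hw, ← sub_add_cancel (x + θ x) (algebraMap F A (2 * c)), add_sub_cancel_right]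
    exact add_mem (Algebra.self_mem_adjoin_singleton F _) (Subalgebra.algebraMap_mem _ _)
  obtain ⟨j, hj⟩ := exists_associated_pow_of_mem_adjoin
    ((Commute.all _ _).isNilpotent_mul_left (hy.pow_of_pos two_ne_zero)) hrw
  have hassoc : Associated (y ^ k) (y ^ (2 * j)) := by
    refine h.symm.trans (hj.trans ?_)
    rw [mul_pow, ← pow_mul]
    exact associated_unit_mul_left _ _ ((IsUnit.of_mul_eq_one x hx).pow j)
  exact (eq_of_associated_pow_of_isNilpotent hy hassoc hk).symm ▸ even_two_mul j

end Involution

section SelfDual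

variable {p : F[X]} {k : ℕ}
  {θ : (F[X] ⧸ Ideal.span {p ^ (k + 1)}) ≃ₐ[F] F[X] ⧸ Ideal.span {p ^ (k + 1)}}

local notation "mk" => Ideal.Quotient.mk (Ideal.span {p ^ (k + 1)})

theorem exists_associated_X_sub_C_of_apply_mk_pow (hp : Irreducible p)
    (hθ : θ (mk X) * mk X = 1) (h : θ (mk (p ^ k)) = mk (p ^ k))
    (hX : θ (mk (p ^ k) * mk X) = mk (p ^ k) * mk X) :
    ∃ c : F, (c = 1 ∨ c = -1) ∧ Associated p (X - C c) := by
  have hdvd : p ∣ (X - C 1) * (X - C (-1)) := by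
    have hzero : mk (p ^ k * ((X - C 1) * (X - C (-1)))) = 0 := by
      rw [map_mul, h] at hX
      simp only [map_mul, map_sub, map_neg, map_one]
      linear_combination (-mk X) * hX + mk (p ^ k) * hθ
    rw [Ideal.Quotient.eq_zero_iff_dvd, pow_succ] at hzero
    exact (mul_dvd_mul_iff_left (pow_ne_zero _ hp.ne_zero)).1 hzero
  rcases hp.prime.dvd_or_dvd hdvd with h | h
  · exact ⟨1, .inl rfl, hp.associated_of_dvd (irreducible_X_sub_C _) h⟩
  · exact ⟨-1, .inr rfl, hp.associated_of_dvd (irreducible_X_sub_C _) h⟩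

theorem exists_mk_pow_mul_notMem_adjoin (hp : Irreducible p) (hθ : θ (mk X) * mk X = 1)
    (hk : ∀ c : F, c = 1 ∨ c = -1 → Associated p (X - C c) → Even (k + 1)) :
    ∃ a, mk (p ^ k) * a ∉ Algebra.adjoin F {mk X + θ (mk X)} := by
  by_contra! hmem
  have h1 := hmem 1
  rw [mul_one] at h1
  obtain ⟨c, hc, hpc⟩ := exists_associated_X_sub_C_of_apply_mk_pow hp hθ
    (apply_eq_self_of_mem_adjoin_add_apply hθ h1)
    (apply_eq_self_of_mem_adjoin_add_apply hθ (hmem (mk X)))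
  have hassoc (n : ℕ) : Associated (mk (p ^ n)) ((mk X - algebraMap F _ c) ^ n) := by
    have hmk := (hpc.map mk).pow_pow (n := n)
    rwa [map_sub, ← map_pow] at hmk
  have hnil : IsNilpotent (mk X - algebraMap F _ c) :=
    ⟨k + 1, (hassoc _).eq_zero_iff.1 ((mk_pow_eq_zero_iff hp).2 le_rfl)⟩
  have hne : (mk X - algebraMap F _ c) ^ k ≠ 0 :=
    (hassoc k).ne_zero_iff.1 fun h => by simpa using (mk_pow_eq_zero_iff hp).1 h
  exact Nat.even_add_one.1 (hk c hc hpc)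
    (even_of_mem_adjoin_of_associated_pow hc hθ hnil hne h1 (hassoc k))

end SelfDual

theorem hasSymplecticForm_quotient_span_pow {p : F[X]} (hp : Irreducible p)
    (hp0 : p.coeff 0 ≠ 0) (h : Associated p p.reverse) {e : ℕ}
    (he : ∀ c : F, c = 1 ∨ c = -1 → Associated p (X - C c) → Even e) :
    HasSymplecticForm F (F[X] ⧸ Ideal.span {p ^ e}) := by
  cases e with
  | zero =>
    have := subsingleton_quotient_span_pow_zero (p := p)
    exact .of_subsingleton
  | succ k =>
    obtain ⟨θ, hθ⟩ := exists_algEquiv_mk_X_mul_mk_X_eq_one (coeff_zero_pow_ne_zero_s3 hp0 (k + 1))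
      (q' := p ^ (k + 1)) (by rw [reverse_pow_of_domain]; exact h.pow_pow)
    obtain ⟨a, ha⟩ := exists_mk_pow_mul_notMem_adjoin hp hθ he
    obtain ⟨φ, hφR, hφ⟩ := exists_le_ker_forall_apply_mul hp
      (Subalgebra.toSubmodule (Algebra.adjoin F _)) ha
    refine ⟨twistedPairing φ θ, fun a => hφR ?_, (nondegenerate_twistedPairing hφ θ).1,
      twistedPairing_mul_mul φ θ hθ⟩
    obtain ⟨g, rfl⟩ := Ideal.Quotient.mk_surjective a
    have hg := aeval_mul_apply_aeval_mem_adjoin hθ g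
    rwa [aeval_mk_X] at hg

section Decomposition

variable (F) (M : Type*) [AddCommGroup M] [Module F M] [Module F[X] M] [IsScalarTower F F[X] M]
  [FiniteDimensional F M]

theorem isTorsion_of_finiteDimensional : IsTorsion F[X] M := by
  intro v
  let f := Algebra.lsmul F F M (X : F[X])
  have hf : IsIntegral F f := Algebra.IsIntegral.isIntegral f
  refine ⟨⟨minpoly F f, mem_nonZeroDivisors_of_ne_zero (minpoly.ne_zero hf)⟩, ?_⟩
  have hX := aeval_algHom_apply (Algebra.lsmul F F M) (X : F[X]) (minpoly F f)
  rw [aeval_X_left_apply, minpoly.aeval] at hX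
  exact (LinearMap.congr_fun hX v).symm

theorem exists_linearEquiv_pi_quotient_span_pow :
    ∃ (n : ℕ) (p : Fin n → F[X]) (e : Fin n → ℕ), (∀ i, Irreducible (p i)) ∧
      Nonempty (M ≃ₗ[F[X]] ∀ i, F[X] ⧸ Ideal.span {p i ^ e i}) := by
  have := Module.Finite.of_restrictScalars_finite F F[X] M
  obtain ⟨ι, _, p, hp, e, ⟨f⟩⟩ :=
    equiv_directSum_of_isTorsion (isTorsion_of_finiteDimensional F M)
  classical
  let σ := Fintype.equivFin ι
  exact ⟨_, p ∘ σ.symm, e ∘ σ.symm, fun i => hp _, ⟨f.trans <|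
    (DirectSum.linearEquivFunOnFintype F[X] ι fun i => F[X] ⧸ Ideal.span {p i ^ e i}).trans <|
      LinearEquiv.piCongrLeft' F[X] _ σ⟩⟩

end Decomposition

/-- The product of a family splits off the factor at `a`. -/
def piEquivProdPiNe (R : Type*) {ι : Type*} [Semiring R] (M : ι → Type*)
    [∀ i, AddCommMonoid (M i)] [∀ i, Module R (M i)] [DecidableEq ι] (a : ι) :
    (∀ i, M i) ≃ₗ[R] M a × ∀ i : {i // i ≠ a}, M i :=
  (LinearEquiv.piCongrLeft R M (Equiv.optionSubtypeNe a)).symm.trans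
    (LinearEquiv.piOptionEquivProd R)

theorem HasSymplecticInvariants.elemDivWeight_reverse {M : Type*} [AddCommGroup M] [Module F M]
    [Module F[X] M] [IsScalarTower F F[X] M] (h : HasSymplecticInvariants F M) (g : F[X]) (m : ℕ) :
    elemDivWeight M g.reverse m = elemDivWeight M g m := by
  simp only [elemDivWeight, ← reverse_pow_of_domain, h.nullity_reverse]

theorem HasSymplecticForm.of_linearEquiv_prod {K M N : Type*}
    [AddCommGroup K] [Module F K] [Module F[X] K] [IsScalarTower F F[X] K]
    [AddCommGroup M] [Module F M] [Module F[X] M] [IsScalarTower F F[X] M] [FiniteDimensional F M]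
    [AddCommGroup N] [Module F N] [Module F[X] N] [IsScalarTower F F[X] N] [FiniteDimensional F N]
    (f : K ≃ₗ[F[X]] M × N) (hK : HasSymplecticInvariants F K) (hM : HasSymplecticForm F M)
    (hN : HasSymplecticInvariants F N → HasSymplecticForm F N) : HasSymplecticForm F K :=
  (hM.prod (hN ((hK.congr f).of_prod_left hM.hasSymplecticInvariants))).congr f.symm

section Pairing

variable {ι : Type*} {p : ι → F[X]} {e : ι → ℕ}

open scoped Classical in
theorem elemDivWeight_pi_quotient_span_pow [Fintype ι] (hp : ∀ i, Irreducible (p i)) {g : F[X]}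
    (hg : Irreducible g) {m : ℕ} (hm : 0 < m) :
    elemDivWeight (∀ i, F[X] ⧸ Ideal.span {p i ^ e i}) g m =
      Finset.card {i | Associated g (p i) ∧ e i = m} * g.natDegree := by
  have (i : ι) := finiteDimensional_quotient_span (pow_ne_zero (e i) (hp i).ne_zero)
  simp only [elemDivWeight_pi, elemDivWeight_quotient_span_pow (hp _) hg _ hm, ← Finset.sum_filter,
    Finset.sum_const, nsmul_eq_mul]

variable [Finite ι]

theorem elemDivWeight_pi_quotient_span_pow_ne_zero_iff (hp : ∀ i, Irreducible (p i)) {g : F[X]}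
    (hg : Irreducible g) {m : ℕ} (hm : 0 < m) :
    elemDivWeight (∀ i, F[X] ⧸ Ideal.span {p i ^ e i}) g m ≠ 0 ↔
      ∃ i, Associated g (p i) ∧ e i = m := by
  classical
  have := Fintype.ofFinite ι
  rw [elemDivWeight_pi_quotient_span_pow hp hg hm]
  simp [hg.natDegree_pos.ne', Finset.filter_eq_empty_iff]

variable (hp : ∀ i, Irreducible (p i))
  (h : HasSymplecticInvariants F (∀ i, F[X] ⧸ Ideal.span {p i ^ e i}))
include hp h

theorem coeff_zero_ne_zero_of_pos {a : ι} (ha : 0 < e a) : (p a).coeff 0 ≠ 0 := by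
  intro h0
  have hXp : Associated X (p a) := irreducible_X.associated_of_dvd (hp a) (X_dvd_iff.2 h0)
  have hX : (X : F[X]).reverse = 1 := by simpa using reverse_X_sub_C (0 : F)
  refine (elemDivWeight_pi_quotient_span_pow_ne_zero_iff hp irreducible_X ha).2 ⟨a, hXp, rfl⟩ ?_
  rw [← h.elemDivWeight_reverse, hX]
  exact elemDivWeight_eq_zero_of_isUnit isUnit_one _

theorem exists_ne_associated_reverse_of_not_associated {a : ι} (ha : 0 < e a)
    (hpa : ¬ Associated (p a) (p a).reverse) :
    ∃ b, b ≠ a ∧ Associated (p b) (p a).reverse ∧ e b = e a := by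
  have hrev := irreducible_reverse (hp a) (coeff_zero_ne_zero_of_pos hp h ha)
  have hne := (elemDivWeight_pi_quotient_span_pow_ne_zero_iff hp (hp a) ha).2 ⟨a, .rfl, rfl⟩
  rw [← h.elemDivWeight_reverse] at hne
  obtain ⟨b, hb, hba⟩ := (elemDivWeight_pi_quotient_span_pow_ne_zero_iff hp hrev ha).1 hne
  refine ⟨b, ?_, hb.symm, hba⟩
  rintro rfl
  exact hpa hb.symm

theorem exists_ne_associated_reverse_of_odd {a : ι} {c : F} (hc : c = 1 ∨ c = -1)
    (hpa : Associated (p a) (X - C c)) (ha : Odd (e a)) :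
    ∃ b, b ≠ a ∧ Associated (p b) (p a).reverse ∧ e b = e a := by
  classical
  have := Fintype.ofFinite ι
  have heven := h.even_elemDivWeight c hc (e a) ha
  rw [elemDivWeight_pi_quotient_span_pow hp (irreducible_X_sub_C c) ha.pos, natDegree_X_sub_C,
    Nat.cast_one, mul_one, Int.even_coe_nat] at heven
  have hmem : a ∈ ({i | Associated (X - C c) (p i) ∧ e i = e a} : Finset ι) := by
    simp [hpa.symm]
  have hcard : 1 < Finset.card {i | Associated (X - C c) (p i) ∧ e i = e a} := by
    have := Finset.card_pos.2 ⟨a, hmem⟩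
    grind
  obtain ⟨b, hb, hba⟩ := Finset.exists_mem_ne hcard a
  obtain ⟨hcb, heb⟩ := (Finset.mem_filter.1 hb).2
  exact ⟨b, hba, hcb.symm.trans <| (associated_reverse_X_sub_C hc).symm.trans <|
    (associated_reverse hpa).symm, heb⟩

theorem hasSymplecticForm_or_exists_ne (a : ι) :
    HasSymplecticForm F (F[X] ⧸ Ideal.span {p a ^ e a}) ∨ ∃ b, b ≠ a ∧
      HasSymplecticForm F ((F[X] ⧸ Ideal.span {p a ^ e a}) × (F[X] ⧸ Ideal.span {p b ^ e b})) := by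
  obtain ha | ha := Nat.eq_zero_or_pos (e a)
  · have := subsingleton_quotient_span_pow_zero (p := p a)
    rw [ha]
    exact .inl .of_subsingleton
  have hp0 := coeff_zero_ne_zero_of_pos hp h ha
  by_cases hself : Associated (p a) (p a).reverse ∧
      ∀ c : F, c = 1 ∨ c = -1 → Associated (p a) (X - C c) → Even (e a)
  · exact .inl (hasSymplecticForm_quotient_span_pow (hp a) hp0 hself.1 hself.2)
  obtain ⟨b, hba, hb, hbe⟩ : ∃ b, b ≠ a ∧ Associated (p b) (p a).reverse ∧ e b = e a := by
    by_cases hrev : Associated (p a) (p a).reverse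
    · obtain ⟨c, hc, hpc, hodd⟩ : ∃ c : F, (c = 1 ∨ c = -1) ∧ Associated (p a) (X - C c) ∧
          Odd (e a) := by
        by_contra! hno
        exact hself ⟨hrev, fun c hc hpc => by simpa using hno c hc hpc⟩
      exact exists_ne_associated_reverse_of_odd hp h hc hpc hodd
    · exact exists_ne_associated_reverse_of_not_associated hp h ha hrev
  refine .inr ⟨b, hba, ?_⟩
  rw [hbe]
  exact hasSymplecticForm_prod_quotient_span_pow (hp a) hp0 hb (e a)

end Pairing

theorem hasSymplecticForm_pi_quotient_span_pow {ι : Type*} [Finite ι] {p : ι → F[X]} {e : ι → ℕ}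
    (hp : ∀ i, Irreducible (p i))
    (h : HasSymplecticInvariants F (∀ i, F[X] ⧸ Ideal.span {p i ^ e i})) :
    HasSymplecticForm F (∀ i, F[X] ⧸ Ideal.span {p i ^ e i}) := by
  classical
  induction hn : Nat.card ι using Nat.strong_induction_on generalizing ι with
  | _ n ih =>
    obtain _ | ⟨⟨a⟩⟩ := isEmpty_or_nonempty ι
    · exact .of_subsingleton
    have (i : ι) := finiteDimensional_quotient_span (pow_ne_zero (e i) (hp i).ne_zero)
    let f := piEquivProdPiNe F[X] (fun i => F[X] ⧸ Ideal.span {p i ^ e i}) a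
    have hlt : Nat.card {i // i ≠ a} < n :=
      hn ▸ Finite.card_subtype_lt (x := a) (by simp)
    obtain ha | ⟨b, hba, hab⟩ := hasSymplecticForm_or_exists_ne hp h a
    · exact .of_linearEquiv_prod f h ha fun hrest => ih _ hlt (fun i => hp i) hrest rfl
    · let g := piEquivProdPiNe F[X] (fun i : {i // i ≠ a} => F[X] ⧸ Ideal.span {p i ^ e i})
        ⟨b, hba⟩
      have hlt' : Nat.card {i : {i // i ≠ a} // i ≠ ⟨b, hba⟩} < n :=
        (Finite.card_subtype_le _).trans_lt hlt
      exact .of_linearEquiv_prod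
        (f.trans <| ((LinearEquiv.refl F[X] _).prodCongr g).trans
          (LinearEquiv.prodAssoc F[X] _ _ _).symm) h hab
        fun hrest => ih _ hlt' (fun i => hp i) hrest rfl

theorem hasSymplecticForm_iff {M : Type*} [AddCommGroup M] [Module F M]
    [Module F[X] M] [IsScalarTower F F[X] M] [FiniteDimensional F M] :
    HasSymplecticForm F M ↔ HasSymplecticInvariants F M := by
  refine ⟨HasSymplecticForm.hasSymplecticInvariants, fun h => ?_⟩
  obtain ⟨n, p, e, hp, ⟨f⟩⟩ := exists_linearEquiv_pi_quotient_span_pow F M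
  exact (hasSymplecticForm_pi_quotient_span_pow hp (h.congr f)).congr f.symm

theorem exists_separatingLeft_apply_smul (F M : Type*) [Field F] [AddCommGroup M] [Module F M]
    [Module F[X] M] [IsScalarTower F F[X] M] [FiniteDimensional F M] :
    ∃ β : LinearMap.BilinForm F M, β.SeparatingLeft ∧
      ∀ (g : F[X]) v w, β (g • v) w = β v (g • w) := by
  obtain ⟨n, p, e, hp, ⟨f⟩⟩ := exists_linearEquiv_pi_quotient_span_pow F M
  choose φ hφ using fun i => exists_forall_apply_mul (hp i) (e i)
  let π (i : Fin n) : M →ₗ[F] F[X] ⧸ Ideal.span {p i ^ e i} :=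
    .proj i ∘ₗ f.toLinearMap.restrictScalars F
  let β : LinearMap.BilinForm F M :=
    ∑ i, ((LinearMap.mul F _).compr₂ (φ i)).compl₁₂ (π i) (π i)
  have hβ (v w : M) : β v w = ∑ i, φ i (f v i * f w i) := by
    simp [β, π]
  refine ⟨β, fun v hv => f.map_eq_zero_iff.1 (funext fun i => hφ i _ fun b => ?_),
    fun g v w => ?_⟩
  · have h := hv (f.symm (Pi.single i b))
    rw [hβ, Finset.sum_eq_single i (fun j _ hj => by simp [hj]) (by simp)] at h
    simpa using h
  · simp only [hβ, map_smul, Pi.smul_apply, smul_mul_assoc, mul_smul_comm]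

theorem pow_mul_aeval_reflect {R A : Type*} [CommSemiring R] [Semiring A] [Algebra R A] {x y : A}
    (h : x * y = 1) {n : ℕ} {g : R[X]} (hg : g.natDegree ≤ n) :
    x ^ n * aeval y (reflect n g) = aeval x g := by
  refine induction_with_natDegree_le (fun g => x ^ n * aeval y (reflect n g) = aeval x g) n ?_ ?_
    ?_ g hg
  · simp
  · intro k a _ hk
    have hxy : x ^ n * y ^ (n - k) = x ^ k := by
      nth_rw 1 [← Nat.add_sub_of_le hk]
      rw [pow_add, mul_assoc, pow_mul_pow_eq_one _ h, mul_one]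
    simp [revAt_le hk, hxy, ← Algebra.smul_def]
  · intro f g _ _ hf hg
    rw [reflect_add, map_add, map_add, mul_add, hf, hg]

section AEval

variable {V : Type*} [AddCommGroup V] [Module F V]

theorem hasSymplecticForm_aeval'_iff (f : End F V) :
    HasSymplecticForm F (AEval' f) ↔ ∃ β : LinearMap.BilinForm F V,
      β.IsAlt ∧ β.SeparatingLeft ∧ ∀ v w, β (f v) (f w) = β v w := by
  let e := AEval'.of f
  constructor
  · rintro ⟨β, halt, hsep, hX⟩
    refine ⟨β.compl₁₂ e.toLinearMap e.toLinearMap, fun v => halt (e v), fun v hv => ?_,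
      fun v w => ?_⟩
    · exact e.map_eq_zero_iff.1 (hsep _ fun w => by simpa using hv (e.symm w))
    · simpa [e, AEval'.X_smul_of] using hX (e v) (e w)
  · rintro ⟨β, halt, hsep, hX⟩
    refine ⟨β.compl₁₂ e.symm.toLinearMap e.symm.toLinearMap, fun v => halt (e.symm v),
      fun v hv => ?_, fun v w => ?_⟩
    · exact e.symm.map_eq_zero_iff.1 (hsep _ fun w => by simpa using hv (e w))
    · simpa [e] using hX (e.symm v) (e.symm w)

theorem nullity_aeval' (f : End F V) (g : F[X]) :
    nullity (AEval' f) g = finrank F (LinearMap.ker (aeval f g)) := by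
  have h : (LinearMap.ker (aeval f g)).map (AEval'.of f : V →ₗ[F] AEval' f) =
      LinearMap.ker (Algebra.lsmul F F (AEval' f) g) := by
    ext v
    rw [Submodule.mem_map_equiv]
    change aeval f g • (AEval'.of f).symm v = 0 ↔ g • v = 0
    rw [← AEval.of_symm_smul, LinearEquiv.map_eq_zero_iff]
  rw [nullity, ← h, LinearEquiv.finrank_map_eq]

theorem nullity_aeval'_reverse_of_mul_eq_one {f f' : End F V} (h : f * f' = 1) (h' : f' * f = 1)
    (g : F[X]) :
    nullity (AEval' f') g.reverse = nullity (AEval' f) g := by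
  have hinj : LinearMap.ker (f ^ g.natDegree) = ⊥ := by
    refine LinearMap.ker_eq_bot_of_inverse (g := f' ^ g.natDegree) ?_
    exact pow_mul_pow_eq_one _ h'
  rw [nullity_aeval', nullity_aeval', ← pow_mul_aeval_reflect h le_rfl, Module.End.mul_eq_comp,
    LinearMap.ker_comp_of_ker_eq_bot _ hinj, reverse]

end AEval

section Matrix

variable {ι : Type*} [Fintype ι] [DecidableEq ι] {A A' S : Matrix ι ι F}

theorem exists_isUnit_eq_inv_mul_mul_iff {R : Type*} [CommRing R] {A A' : Matrix ι ι R} :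
    (∃ P : Matrix ι ι R, IsUnit P ∧ A' = P⁻¹ * A * P) ↔
      ∃ S : Matrix ι ι R, IsUnit S ∧ SemiconjBy S A A' := by
  constructor
  · rintro ⟨P, hP, rfl⟩
    refine ⟨P⁻¹, isUnit_nonsing_inv_iff.2 hP, ?_⟩
    rw [SemiconjBy, mul_assoc _ P, mul_nonsing_inv _ ((isUnit_iff_isUnit_det _).1 hP), mul_one]
  · rintro ⟨S, hS, h⟩
    have hdet := (isUnit_iff_isUnit_det _).1 hS
    refine ⟨S⁻¹, isUnit_nonsing_inv_iff.2 hS, ?_⟩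
    rw [nonsing_inv_nonsing_inv _ hdet, h.eq, mul_assoc, mul_nonsing_inv _ hdet, mul_one]

theorem nonempty_linearEquiv_aeval'_toLin' (hS : IsUnit S) (h : SemiconjBy S A A') :
    Nonempty (AEval' (toLin' A) ≃ₗ[F[X]] AEval' (toLin' A')) := by
  refine ⟨LinearEquiv.ofAEval _
    ((toLinearEquiv' S hS.invertible).trans (AEval'.of (toLin' A'))) fun v => ?_⟩
  change AEval'.of (toLin' A') (S *ᵥ A *ᵥ v) = (X : F[X]) • AEval'.of (toLin' A') (S *ᵥ v)
  rw [AEval'.X_smul_of, toLin'_apply, mulVec_mulVec, mulVec_mulVec, h.eq]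

theorem exists_isUnit_semiconjBy_transpose (A : Matrix ι ι F) :
    ∃ S : Matrix ι ι F, IsUnit S ∧ SemiconjBy S A Aᵀ := by
  obtain ⟨β, hsep, hX⟩ := exists_separatingLeft_apply_smul F (AEval' (toLin' A))
  let e := AEval'.of (toLin' A)
  obtain ⟨S, hS⟩ := (toLinearMap₂' F).surjective (β.compl₁₂ e.toLinearMap e.toLinearMap)
  refine ⟨S, ?_, ?_⟩
  · rw [isUnit_iff_isUnit_det, isUnit_iff_ne_zero,
      ← LinearMap.separatingLeft_toLinearMap₂'_iff_det_ne_zero, hS]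
    exact fun v hv => e.map_eq_zero_iff.1 (hsep _ fun w => by simpa using hv (e.symm w))
  · have hadj : (toLinearMap₂' F S).IsAdjointPair (toLinearMap₂' F S) (toLin' A) (toLin' A) := by
      intro v w
      rw [hS]
      simpa [e, AEval'.X_smul_of] using hX X (e v) (e w)
    exact ((isAdjointPair_toLinearMap₂' _ _ _ _).1 hadj).symm

theorem isAlt_toLinearMap₂'_iff {R : Type*} [CommRing R] {B : Matrix ι ι R} :
    (toLinearMap₂' R B : LinearMap.BilinForm R (ι → R)).IsAlt ↔ Bᵀ = -B ∧ ∀ i, B i i = 0 := by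
  constructor
  · intro h
    have hB (i j : ι) : (toLinearMap₂' R B : LinearMap.BilinForm R (ι → R)) (Pi.single i 1)
        (Pi.single j 1) = B i j := by
      rw [toLinearMap₂'_apply', mulVec_single_one, single_one_dotProduct, col_apply]
    refine ⟨Matrix.ext fun i j => ?_, fun i => ?_⟩
    · rw [transpose_apply, Matrix.neg_apply, ← hB, ← hB]
      exact (h.neg _ _).symm
    · rw [← hB]
      exact h _
  · rintro ⟨hB, hB0⟩ v
    simp only [toLinearMap₂'_apply, ← Finset.sum_product', Finset.univ_product_univ]
    refine Finset.sum_involution (fun i _ => i.swap) (fun i _ => ?_) (fun i _ hi h => hi ?_)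
      (fun _ _ => Finset.mem_univ _) fun i _ => i.swap_swap
    · have hij : B i.2 i.1 = -B i.1 i.2 := congrFun (congrFun hB i.1) i.2
      simp only [Prod.fst_swap, Prod.snd_swap, hij, smul_eq_mul]
      ring
    · have hij : i.2 = i.1 := congrArg Prod.fst h
      simp [hij, hB0]

theorem hasSymplecticForm_aeval'_toLin'_transpose_iff :
    HasSymplecticForm F (AEval' (toLin' Aᵀ)) ↔ ∃ B : Matrix ι ι F,
      IsUnit B ∧ Bᵀ = -B ∧ (∀ i, B i i = 0) ∧ A * B * Aᵀ = B := by
  rw [hasSymplecticForm_aeval'_iff, (toLinearMap₂' F).surjective.exists]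
  refine exists_congr fun B => ?_
  have hisom : (∀ v w, toLinearMap₂' F B (toLin' Aᵀ v) (toLin' Aᵀ w) = toLinearMap₂' F B v w) ↔
      A * B * Aᵀ = B := by
    have hcomp : toLinearMap₂' F (A * B * Aᵀ) =
        (toLinearMap₂' F B).compl₁₂ (toLin' Aᵀ) (toLin' Aᵀ) := by
      rw [toLinearMap₂'_comp, transpose_transpose]
    refine ⟨fun h => (toLinearMap₂' F).injective (hcomp.trans (LinearMap.ext₂ h)), fun h v w => ?_⟩
    rw [← LinearMap.compl₁₂_apply, ← hcomp, h]
  rw [hisom, LinearMap.separatingLeft_toLinearMap₂'_iff_det_ne_zero, ← isUnit_iff_ne_zero,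
    ← isUnit_iff_isUnit_det]
  have := isAlt_toLinearMap₂'_iff (B := B)
  tauto

theorem nullity_aeval'_toLin' (A : Matrix ι ι F) (g : F[X]) :
    nullity (AEval' (toLin' A)) g = finrank F (LinearMap.ker (toLin' (aeval A g))) := by
  have h : aeval (toLin' A) g = toLin' (aeval A g) := aeval_algHom_apply toLinAlgEquiv' A g
  rw [nullity_aeval', h]

theorem elemDivWeight_aeval'_toLin' {n : ℕ} (A : Matrix (Fin n) (Fin n) F) (c : F) (m : ℕ) :
    elemDivWeight (AEval' (toLin' A)) (X - C c) m = edMultiplicity A c m := by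
  have h (k : ℕ) : aeval A ((X - C c) ^ k) = (A - c • 1) ^ k := by
    rw [map_pow, map_sub, aeval_X, aeval_C, Algebra.algebraMap_eq_smul_one]
  rw [elemDivWeight, nullity_aeval'_toLin', nullity_aeval'_toLin', nullity_aeval'_toLin', h, h, h,
    edMultiplicity]

theorem hasSymplecticInvariants_aeval'_toLin' {n : ℕ} {A S : Matrix (Fin n) (Fin n) F}
    (hA : IsUnit A) (hS : IsUnit S) (h : SemiconjBy S A A⁻¹)
    (heven : ∀ c : F, c = 1 ∨ c = -1 → ∀ m : ℕ, 1 ≤ m → Odd m → Even (edMultiplicity A c m)) :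
    HasSymplecticInvariants F (AEval' (toLin' A)) where
  nullity_reverse g := by
    have hdet := (isUnit_iff_isUnit_det A).1 hA
    obtain ⟨e⟩ := nonempty_linearEquiv_aeval'_toLin' hS h
    rw [nullity_congr e, nullity_aeval'_reverse_of_mul_eq_one (f := toLin' A)]
    · rw [Module.End.mul_eq_comp, ← toLin'_mul, mul_nonsing_inv _ hdet, toLin'_one]
      rfl
    · rw [Module.End.mul_eq_comp, ← toLin'_mul, nonsing_inv_mul _ hdet, toLin'_one]
      rfl
  even_elemDivWeight c hc m hm := by
    rw [elemDivWeight_aeval'_toLin']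
    exact heven c hc m hm.pos hm

end Matrix

end

theorem exists_alternating_form_iff_general {F : Type*} [Field F] {n : ℕ}
    (X : Matrix (Fin n) (Fin n) F) (hX : IsUnit X) :
    (∃ B : Matrix (Fin n) (Fin n) F, IsUnit B ∧ Bᵀ = -B ∧ (∀ i, B i i = 0) ∧
        X * B * Xᵀ = B) ↔
      ((∃ P : Matrix (Fin n) (Fin n) F, IsUnit P ∧ X⁻¹ = P⁻¹ * X * P) ∧
        ∀ lam : F, (lam = 1 ∨ lam = -1) → ∀ m : ℕ, 1 ≤ m → Odd m →
          Even (edMultiplicity X lam m)) := by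
  obtain ⟨S, hS, hSX⟩ := exists_isUnit_semiconjBy_transpose X
  obtain ⟨e⟩ := nonempty_linearEquiv_aeval'_toLin' hS hSX
  rw [exists_isUnit_eq_inv_mul_mul_iff]
  constructor
  · rintro ⟨B, hB, hform⟩
    have hBX : SemiconjBy B Xᵀ X⁻¹ := by
      rw [SemiconjBy, ← nonsing_inv_mul_cancel_left X (B * Xᵀ) ((isUnit_iff_isUnit_det X).1 hX),
        ← mul_assoc X, hform.2.2]
    refine ⟨⟨B * S, hB.mul hS, hBX.mul_left hSX⟩, fun c hc m _ hm => ?_⟩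
    rw [← elemDivWeight_aeval'_toLin']
    exact ((hasSymplecticForm_aeval'_toLin'_transpose_iff.2 ⟨B, hB, hform⟩).congr
      e.symm).hasSymplecticInvariants.even_elemDivWeight c hc m hm
  · rintro ⟨⟨T, hT, hTX⟩, heven⟩
    rw [← hasSymplecticForm_aeval'_toLin'_transpose_iff]
    exact (hasSymplecticForm_iff.2 (hasSymplecticInvariants_aeval'_toLin' hX hT hTX heven)).congr e

/-- Let `F` be a finite field and `X ∈ GL(n,F)`.  There exists an invertible alternating
matrix `B` with `X·B·Xᵀ = B` iff `X` is similar to `X⁻¹` and for every `λ ∈ {1,−1}` and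
every odd `m ≥ 1` the multiplicity of `(t−λ)^m` as an elementary divisor of `X` is even. -/
theorem exists_alternating_form_iff
    {F : Type*} [Field F] [Fintype F] {n : ℕ}
    (X : Matrix (Fin n) (Fin n) F) (hX : IsUnit X) :
    (∃ B : Matrix (Fin n) (Fin n) F, IsUnit B ∧ Bᵀ = -B ∧ (∀ i, B i i = 0) ∧
        X * B * Xᵀ = B) ↔
      ((∃ P : Matrix (Fin n) (Fin n) F, IsUnit P ∧ X⁻¹ = P⁻¹ * X * P) ∧
        ∀ lam : F, (lam = 1 ∨ lam = -1) → ∀ m : ℕ, 1 ≤ m → Odd m →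
          Even (edMultiplicity X lam m)) :=
  exists_alternating_form_iff_general X hX
end
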